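/- arXiv:2411.11316 — 5 statements merged into one kernel-verified Lean document; each statement's English description precedes it below -/
import Mathlib

section
/- Let P ∈ ℝ[x] be a polynomial whose coefficient of x is non-Liouville. Then there exist constants μ ∈ (0,1), C > 0 and C₀ > 0 such that for every positive integer d and every real X with X/d > C, one has | #A_d(X) − X/d² | ≤ C₀·(X/d)^{1−μ}. -/
open Real Finset

/-- `α` is Liouville: for every `n ∈ ℕ` there are integers `p, q` with `q > 1`
and `|α - p/q| ≤ q^(-n)`. -/
def IsLiouvilleReal (α : ℝ) : Prop :=
  ∀ n : ℕ, ∃ p q : ℤ, 1 < q ∧ |α - (p : ℝ) / (q : ℝ)| ≤ (q : ℝ) ^ (-(n : ℤ))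

open Classical in
/-- The finset of primes `p < z`. -/
noncomputable def primesLt (z : ℝ) : Finset ℕ :=
  (Finset.range ⌈z⌉₊).filter fun p => p.Prime ∧ (p : ℝ) < z

/-- `P_z`, the product of all primes `p < z`. -/
noncomputable def Pz (z : ℝ) : ℕ := ∏ p ∈ primesLt z, p

open Classical in
/-- `S(X)`: the number of naturals `1 ≤ x ≤ X` with `gcd(x, ⌊P(x)⌋) = 1`. -/
noncomputable def S (P : Polynomial ℝ) (X : ℝ) : ℕ :=
  ((Finset.Icc 1 ⌊X⌋₊).filter fun x => Int.gcd (x : ℤ) ⌊P.eval (x : ℝ)⌋ = 1).card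

open Classical in
/-- `A_d(X)`: the set of naturals `1 ≤ x ≤ X` with `d ∣ x` and `d ∣ ⌊P(x)⌋`. -/
noncomputable def AP (P : Polynomial ℝ) (d : ℕ) (X : ℝ) : Finset ℕ :=
  (Finset.Icc 1 ⌊X⌋₊).filter fun x => (d : ℤ) ∣ (x : ℤ) ∧ (d : ℤ) ∣ ⌊P.eval (x : ℝ)⌋

open Classical in
/-- `S(X, z)`: the number of naturals `1 ≤ x ≤ X` with `gcd(gcd(x, ⌊P(x)⌋), P_z) = 1`. -/
noncomputable def S2 (P : Polynomial ℝ) (X z : ℝ) : ℕ :=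
  ((Finset.Icc 1 ⌊X⌋₊).filter fun x =>
    Nat.gcd (Int.gcd (x : ℤ) ⌊P.eval (x : ℝ)⌋) (Pz z) = 1).card

/-- `z = X ^ (c / log log X)` with `c = 1/(2(A+1))`. -/
noncomputable def zf (A X : ℝ) : ℝ := X ^ ((1 / (2 * (A + 1))) / Real.log (Real.log X))


/-- `e(x) = exp(2πix)`. -/
noncomputable def ee (x : ℝ) : ℂ := Complex.exp ((2 * π * x : ℝ) * Complex.I)

lemma ee_norm (x : ℝ) : ‖ee x‖ = 1 := Complex.norm_exp_ofReal_mul_I _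

lemma ee_add (x y : ℝ) : ee (x + y) = ee x * ee y := by
  unfold ee
  rw [← Complex.exp_add]
  congr 1
  push_cast
  ring

lemma ee_zero : ee 0 = 1 := by simp [ee]

lemma ee_int (n : ℤ) : ee n = 1 := by
  unfold ee
  rw [Complex.exp_eq_one_iff]
  exact ⟨n, by push_cast; ring⟩

lemma ee_conj (x : ℝ) : (starRingEnd ℂ) (ee x) = ee (-x) := by
  unfold ee
  rw [← Complex.exp_conj]
  congr 1
  rw [map_mul, Complex.conj_ofReal, Complex.conj_I]
  push_cast
  ring

lemma ee_sub_one_norm (x : ℝ) : ‖ee x - 1‖ = 2 * |Real.sin (π * x)| := by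
  have := Complex.norm_exp_I_mul_ofReal_sub_one (2 * π * x)
  unfold ee
  rw [mul_comm, this, norm_mul, Real.norm_eq_abs, Real.norm_eq_abs]
  rw [show 2 * π * x / 2 = π * x by ring]
  simp

lemma ee_sub_one_le (x : ℝ) : ‖ee x - 1‖ ≤ 2 * π * |x| := by
  rw [ee_sub_one_norm]
  have := Real.abs_sin_le_abs (x := π * x)
  rw [abs_mul, abs_of_pos Real.pi_pos] at this
  linarith

lemma ee_sub_norm (x y : ℝ) : ‖ee x - ee y‖ ≤ 2 * π * |x - y| := by
  have : ee x - ee y = (ee (x - y) - 1) * ee y := by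
    rw [sub_mul, ← ee_add]; simp
  rw [this, norm_mul, ee_norm, mul_one]
  exact ee_sub_one_le _

lemma ee_lower (x : ℝ) (hx : |x| ≤ 1 / 2) : 4 * |x| ≤ ‖ee x - 1‖ := by
  rw [ee_sub_one_norm]
  have h1 : |Real.sin (π * x)| = Real.sin (π * |x|) := by
    rcases le_total 0 x with h | h
    · rw [abs_of_nonneg h] at *
      rw [abs_of_nonneg]
      apply Real.sin_nonneg_of_nonneg_of_le_pi <;> nlinarith [Real.pi_pos]
    · rw [abs_of_nonpos h] at *
      rw [mul_neg, Real.sin_neg, abs_of_nonpos]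
      apply Real.sin_nonpos_of_nonpos_of_neg_pi_le <;> nlinarith [Real.pi_pos]
  rw [h1]
  have := Real.mul_le_sin (x := π * |x|) (by positivity) (by nlinarith [Real.pi_pos])
  have h2 : 2 / π * (π * |x|) = 2 * |x| := by field_simp
  linarith

/-- `x` is within `ε` of an integer. -/
def Near (x ε : ℝ) : Prop := ∃ p : ℤ, |x - p| ≤ ε

lemma Near.mono {x ε ε' : ℝ} (h : Near x ε) (h' : ε ≤ ε') : Near x ε' := by
  obtain ⟨p, hp⟩ := h
  exact ⟨p, hp.trans h'⟩

lemma near_half (x : ℝ) : Near x (1 / 2) := ⟨round x, abs_sub_round x⟩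

lemma Near.add {x y ε ε' : ℝ} (h : Near x ε) (h' : Near y ε') : Near (x + y) (ε + ε') := by
  obtain ⟨p, hp⟩ := h
  obtain ⟨q, hq⟩ := h'
  refine ⟨p + q, ?_⟩
  push_cast
  rw [show x + y - (p + q) = (x - p) + (y - q) by ring]
  exact (abs_add_le _ _).trans (add_le_add hp hq)

lemma Near.int_mul {x ε : ℝ} (h : Near x ε) (n : ℤ) : Near (n * x) (|(n : ℝ)| * ε) := by
  obtain ⟨p, hp⟩ := h
  refine ⟨n * p, ?_⟩
  push_cast
  rw [← mul_sub, abs_mul]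
  gcongr

lemma Near.nat_mul {x ε : ℝ} (h : Near x ε) (n : ℕ) : Near (n * x) (n * ε) := by
  simpa using h.int_mul n

lemma Near.sub {x y ε ε' : ℝ} (h : Near x ε) (h' : Near y ε') : Near (x - y) (ε + ε') := by
  have := h.add (h'.int_mul (-1))
  simpa [sub_eq_add_neg] using this

lemma Near.sum {ι : Type*} (s : Finset ι) (f g : ι → ℝ) (h : ∀ i ∈ s, Near (f i) (g i)) :
    Near (∑ i ∈ s, f i) (∑ i ∈ s, g i) := by
  classical
  induction s using Finset.induction_on with
  | empty => exact ⟨0, by simp⟩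
  | insert a s ha ih =>
    rw [Finset.sum_insert ha, Finset.sum_insert ha]
    exact (h a (Finset.mem_insert_self _ _)).add
      (ih fun i hi => h i (Finset.mem_insert_of_mem hi))

lemma vdc_id (f : ℕ → ℂ) (hf : ∀ n, ‖f n‖ = 1) (N : ℕ) :
    ‖∑ m ∈ range N, f m‖ ^ 2 + N =
      2 * (∑ h ∈ range N, ∑ m ∈ range (N - h), f (m + h) * (starRingEnd ℂ) (f m)).re := by
  induction N with
  | zero => simp
  | succ N ih =>
    have h1 : ∑ h ∈ range (N + 1), ∑ m ∈ range (N + 1 - h), f (m + h) * (starRingEnd ℂ) (f m)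
        = ∑ h ∈ range N, ∑ m ∈ range (N - h), f (m + h) * (starRingEnd ℂ) (f m)
          + f N * (starRingEnd ℂ) (∑ m ∈ range (N + 1), f m) := by
      have h2 : ∀ h ∈ range (N + 1), ∑ m ∈ range (N + 1 - h), f (m + h) * (starRingEnd ℂ) (f m)
          = ∑ m ∈ range (N - h), f (m + h) * (starRingEnd ℂ) (f m)
            + f N * (starRingEnd ℂ) (f (N - h)) := by
        intro h hh
        have : h ≤ N := by simpa [Nat.lt_succ_iff] using hh
        rw [show N + 1 - h = (N - h) + 1 by omega, Finset.sum_range_succ,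
          show N - h + h = N by omega]
      rw [Finset.sum_congr rfl h2, Finset.sum_add_distrib, Finset.sum_range_succ]
      rw [← Finset.mul_sum, map_sum,
        ← Finset.sum_range_reflect (fun m => (starRingEnd ℂ) (f m)) (N + 1)]
      simp
    rw [h1, Complex.add_re, mul_add, ← ih, Finset.sum_range_succ]
    set A := ∑ m ∈ range N, f m
    have h3 := hf N
    have h4 : ‖f N‖ ^ 2 = 1 := by rw [h3]; norm_num
    rw [← Complex.normSq_eq_norm_sq] at *
    rw [← Complex.normSq_eq_norm_sq]
    rw [Complex.normSq_apply] at *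
    simp only [Complex.normSq_apply, Complex.add_re, Complex.add_im, Complex.mul_re, map_add,
      Complex.conj_re, Complex.conj_im]
    push_cast
    linarith

lemma vdc (f : ℕ → ℂ) (hf : ∀ n, ‖f n‖ = 1) (N : ℕ) :
    ‖∑ m ∈ range N, f m‖ ^ 2 ≤
      2 * ∑ h ∈ range N, ‖∑ m ∈ range (N - h), f (m + h) * (starRingEnd ℂ) (f m)‖ := by
  have h1 := vdc_id f hf N
  have h2 := Complex.re_le_norm
    (∑ h ∈ range N, ∑ m ∈ range (N - h), f (m + h) * (starRingEnd ℂ) (f m))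
  have h3 := norm_sum_le (range N)
    (fun h => ∑ m ∈ range (N - h), f (m + h) * (starRingEnd ℂ) (f m))
  have : (0 : ℝ) ≤ N := Nat.cast_nonneg _
  linarith

set_option maxHeartbeats 1000000 in
/-- Vinogradov's lemma. -/
lemma vino (K : ℝ) (hK : 2 ≤ K) (N : ℕ) (hN : 16 * K ^ 2 ≤ N) (ε β : ℝ)
    (hε : ε ≤ 1 / (64 * K)) (H : Finset ℕ) (hH : H ⊆ range N) (hc : (N : ℝ) / K ≤ H.card)
    (hb : ∀ h ∈ H, Near (β * h) ε) :
    ∃ q : ℕ, 1 ≤ q ∧ (q : ℝ) ≤ 2 * K ∧ Near (q * β) (16 * K ^ 2 * ε / N) := by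
  have hK0 : 0 < K := by linarith
  have hN0 : (0 : ℝ) < N := by nlinarith
  -- step 1
  obtain ⟨h₁, m₁, h₂, m₂, hlt, hle⟩ : ∃ h₁, h₁ ∈ H ∧ ∃ h₂, h₂ ∈ H ∧ h₁ < h₂ ∧
      (h₂ : ℝ) - h₁ ≤ 2 * K := by
    set L := ⌊2 * K⌋₊ with hL
    have hL1 : 2 * K - 1 < L := by
      have := Nat.lt_floor_add_one (2 * K); linarith
    have hL2 : (L : ℝ) ≤ 2 * K := Nat.floor_le (by linarith)
    have hL0 : (0 : ℝ) < L := by linarith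
    have hLn : 0 < L := by exact_mod_cast hL0
    have hcard : (range (N / L + 1)).card < H.card := by
      rw [card_range]
      have h1 : ((N / L : ℕ) : ℝ) ≤ N / L := Nat.cast_div_le
      have h2 : (N : ℝ) / L ≤ N / (3 / 2 * K) := by
        apply div_le_div_of_nonneg_left hN0.le (by linarith) (by linarith)
      have h3 : (N : ℝ) / K = N / (3 / 2 * K) + N / (3 * K) := by field_simp; norm_num
      have h4 : 1 < (N : ℝ) / (3 * K) := by
        rw [lt_div_iff₀ (by linarith)]; nlinarith
      have : ((N / L + 1 : ℕ) : ℝ) < H.card := by push_cast; linarith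
      exact_mod_cast this
    obtain ⟨a, ha, b, hb', hab, hf⟩ := Finset.exists_ne_map_eq_of_card_lt_of_maps_to hcard
      (f := fun h => h / L) (by
        intro h hh
        have := Finset.mem_range.1 (hH hh)
        simp only [Finset.coe_range, Set.mem_Iio]
        exact Nat.lt_succ_of_le (Nat.div_le_div_right this.le))
    have key : ∀ x y : ℕ, x < y → x / L = y / L → (y : ℝ) - x ≤ 2 * K := by
      intro x y hxy h
      have h1 := Nat.div_add_mod x L
      have h2 := Nat.div_add_mod y L
      have h3 := Nat.mod_lt y hLn
      rw [h] at h1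
      have : y ≤ x + L := by omega
      have : (y : ℝ) ≤ x + L := by exact_mod_cast this
      linarith
    rcases lt_or_gt_of_ne hab with h | h
    · exact ⟨a, ha, b, hb', h, key a b h hf⟩
    · exact ⟨b, hb', a, ha, h, key b a h hf.symm⟩
  set q := h₂ - h₁ with hq
  have hqc : (q : ℝ) = h₂ - h₁ := by rw [hq, Nat.cast_sub hlt.le]
  have hq1 : 1 ≤ q := by omega
  have hq0 : (0 : ℝ) < q := by exact_mod_cast hq1
  refine ⟨q, hq1, by linarith, ?_⟩
  have hq2 : (q : ℝ) ≤ 2 * K := by linarith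
  obtain ⟨p, hp⟩ : Near (q * β) (2 * ε) := by
    have := (hb h₂ m₂).sub (hb h₁ m₁)
    rw [hqc]
    convert this using 1 <;> ring
  refine ⟨p, ?_⟩
  set θ := q * β - p with hθ
  have hε0 : 0 ≤ ε := by have := abs_nonneg θ; linarith
  rcases eq_or_ne θ 0 with h0 | h0
  · rw [h0, abs_zero]; positivity
  have ht : 0 < |θ| := abs_pos.2 h0
  have hε1 : ε ≤ 1 / 128 := hε.trans (by
    rw [div_le_div_iff₀ (by linarith) (by norm_num)]; linarith)
  set W := ⌊1 / (2 * |θ|)⌋₊ with hW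
  have hW1 : (W : ℝ) ≤ 1 / (2 * |θ|) := Nat.floor_le (by positivity)
  have hW2 : 1 / (4 * |θ|) ≤ W := by
    have h1 := Nat.lt_floor_add_one (1 / (2 * |θ|))
    have h2 : 1 / (2 * |θ|) = 1 / (4 * |θ|) + 1 / (4 * |θ|) := by field_simp; norm_num
    have h3 : 1 ≤ 1 / (4 * |θ|) := by
      rw [le_div_iff₀ (by linarith)]; linarith
    linarith
  have hW0 : (0 : ℝ) < W := lt_of_lt_of_le (by positivity) hW2
  have hWn : 0 < W := by exact_mod_cast hW0
  have hWt : W * |θ| ≤ 1 / 2 := by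
    rw [le_div_iff₀ (by linarith)] at hW1; linarith
  set n := ⌊2 * ε / |θ|⌋₊ with hn
  have hn1 : (n : ℝ) ≤ 2 * ε / |θ| := Nat.floor_le (by positivity)
  -- fibre bound
  have hcount : H.card ≤ (n + 1) * (range q ×ˢ range (N / q / W + 1)).card := by
    apply Finset.card_le_mul_card_image_of_maps_to (f := fun h => (h % q, h / q / W))
    · intro h hh
      have := Finset.mem_range.1 (hH hh)
      simp only [Finset.mem_product, Finset.mem_range]
      exact ⟨Nat.mod_lt _ hq1, Nat.lt_succ_of_le
        (Nat.div_le_div_right (Nat.div_le_div_right this.le))⟩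
    · rintro ⟨r, b⟩ -
      set F := H.filter (fun h => (h % q, h / q / W) = (r, b)) with hF
      have hFm : ∀ h ∈ F, h ∈ H ∧ h % q = r ∧ h / q / W = b := by
        intro h hh
        rw [hF, Finset.mem_filter, Prod.mk.injEq] at hh
        exact hh
      rcases F.eq_empty_or_nonempty with he | he
      · rw [he]; simp
      set a := F.min' he with ha
      have haF : a ∈ F := Finset.min'_mem _ _
      have hle : ∀ h ∈ F, a ≤ h := fun h hh => Finset.min'_le _ _ hh
      have hclose : ∀ h ∈ F, h / q ≤ a / q + n := by
        intro h hh
        obtain ⟨g1, g2, g3⟩ := hFm h hh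
        obtain ⟨k1, k2, k3⟩ := hFm a haF
        have hah := hle h hh
        have hdiv : a / q ≤ h / q := Nat.div_le_div_right hah
        obtain ⟨t, ht'⟩ := Nat.exists_eq_add_of_le hdiv
        have htW : t < W := by
          have e1 := Nat.div_add_mod (h / q) W
          have e2 := Nat.div_add_mod (a / q) W
          have e3 := Nat.mod_lt (h / q) hWn
          rw [g3] at e1
          rw [k3] at e2
          omega
        have hha : (h : ℝ) = a + q * t := by
          have e1 := Nat.div_add_mod h q
          have e2 := Nat.div_add_mod a q
          rw [g2, ht'] at e1
          rw [k2] at e2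
          have : h = a + q * t := by rw [mul_add] at e1; omega
          exact_mod_cast this
        obtain ⟨s, hs⟩ := (hb h g1).sub (hb a k1)
        have h5 : β * h - β * a = t * θ + (t * p : ℤ) := by
          rw [hha, hθ]; push_cast; ring
        have htW' : (t : ℝ) ≤ W := by exact_mod_cast htW.le
        have h6 : |t * θ| ≤ 1 / 2 := by
          rw [abs_mul, Nat.abs_cast]
          nlinarith
        have h7 : |t * θ| ≤ 2 * ε := by
          rw [h5] at hs
          have h8 : |(t : ℝ) * θ - ((s - t * p : ℤ) : ℝ)| ≤ 2 * ε := by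
            convert hs using 1
            · congr 1; push_cast; ring
            · ring
          have h9 : |((s - t * p : ℤ) : ℝ)| < 1 := by
            have := abs_sub_abs_le_abs_sub (((s - t * p : ℤ) : ℝ)) (t * θ)
            rw [abs_sub_comm] at this
            linarith
          have h10 : (s - t * p : ℤ) = 0 := by
            rw [← Int.abs_lt_one_iff]; exact_mod_cast h9
          rw [h10] at h8
          simpa using h8
        rw [abs_mul, Nat.abs_cast] at h7
        have : t ≤ n := by
          rw [hn]; apply Nat.le_floor; rw [le_div_iff₀ ht]; exact h7
        omega
      calc F.card = (F.image (fun h => h / q)).card := by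
            rw [Finset.card_image_of_injOn]
            intro x hx y hy hxy
            have hx' := (hFm x hx).2.1
            have hy' := (hFm y hy).2.1
            rw [← Nat.div_add_mod x q, ← Nat.div_add_mod y q, hx', hy']
            simp only at hxy
            rw [hxy]
        _ ≤ (Finset.Icc (a / q) (a / q + n)).card := by
            apply Finset.card_le_card
            intro x hx
            obtain ⟨h, hh, rfl⟩ := Finset.mem_image.1 hx
            exact Finset.mem_Icc.2 ⟨Nat.div_le_div_right (hle h hh), hclose h hh⟩
        _ = n + 1 := by simp; omega
  rw [Finset.card_product, card_range, card_range] at hcount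
  have hcount' : (H.card : ℝ) ≤ (n + 1) * (q * ((N / q / W : ℕ) + 1)) := by exact_mod_cast hcount
  have hd : ((N / q / W : ℕ) : ℝ) ≤ N / q / W := by
    refine Nat.cast_div_le.trans ?_
    gcongr
    exact Nat.cast_div_le
  have h11 : (q : ℝ) * ((N / q / W : ℕ) + 1) ≤ 4 * N * |θ| + 2 * K := by
    have h12 : (q : ℝ) * (N / q / W) = N / W := by field_simp
    have h13 : (N : ℝ) / W ≤ 4 * N * |θ| := by
      rw [div_le_iff₀ hW0]
      rw [div_le_iff₀ (by linarith)] at hW2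
      nlinarith
    have := mul_le_mul_of_nonneg_left hd hq0.le
    linarith
  have h14 : (H.card : ℝ) ≤ (2 * ε / |θ| + 1) * (4 * N * |θ| + 2 * K) := by
    refine hcount'.trans ?_
    apply mul_le_mul _ h11 (by positivity) (by positivity)
    linarith
  have h15 : (2 * ε / |θ| + 1) * (4 * N * |θ| + 2 * K)
      = 8 * N * ε + 4 * N * |θ| + 4 * K * ε / |θ| + 2 * K := by
    field_simp; ring
  have h16 : 4 * N * |θ| ≤ 8 * N * ε := by nlinarith
  have h17 : N * ε ≤ N / (64 * K) := by
    have := mul_le_mul_of_nonneg_left hε hN0.le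
    rwa [mul_one_div] at this
  have h18 : (N : ℝ) / (64 * K) = N / K / 64 := by field_simp
  have h19 : 16 * K ≤ N / K := by rw [le_div_iff₀ hK0]; linarith
  have h20 : N / K / 2 ≤ 4 * K * ε / |θ| := by linarith
  rw [le_div_iff₀ ht] at h20
  rw [le_div_iff₀ hN0]
  have h21 : N / K / 2 * |θ| = |θ| * N / (2 * K) := by field_simp
  rw [h21, div_le_iff₀ (by linarith)] at h20
  nlinarith [mul_nonneg (mul_nonneg hK0.le hK0.le) hε0]


lemma ee_nat_mul (m : ℕ) (x : ℝ) : ee (m * x) = ee x ^ m := by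
  induction m with
  | zero => simp [ee_zero]
  | succ m ih => rw [pow_succ, ← ih, ← ee_add]; congr 1; push_cast; ring

lemma taylor_coeff_sum (r : ℝ) (Q : Polynomial ℝ) (n : ℕ) (hn : Q.natDegree ≤ n) (i : ℕ) :
    (Polynomial.taylor r Q).coeff i
      = ∑ j ∈ range (n + 1), (j.choose i : ℝ) * Q.coeff j * r ^ (j - i) := by
  rw [Polynomial.taylor_coeff, Polynomial.hasseDeriv_apply,
    Polynomial.sum_over_range' _ _ (n + 1) (by omega), Polynomial.eval_finsetSum]
  · apply Finset.sum_congr rfl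
    intro j _
    rw [Polynomial.eval_monomial]
  · intro j; simp

lemma diff_natDegree (h : ℝ) (Q : Polynomial ℝ) (k : ℕ) (hQ : Q.natDegree ≤ k + 1) :
    (Polynomial.taylor h Q - Q).natDegree ≤ k := by
  rw [Polynomial.natDegree_le_iff_coeff_eq_zero]
  intro i hi
  rw [Polynomial.coeff_sub]
  rcases Nat.lt_or_ge (k + 1) i with h1 | h1
  · rw [Polynomial.coeff_eq_zero_of_natDegree_lt (by rw [Polynomial.natDegree_taylor]; omega),
      Polynomial.coeff_eq_zero_of_natDegree_lt (by omega), sub_zero]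
  · have : i = k + 1 := by omega
    subst this
    rw [taylor_coeff_sum h Q (k + 1) hQ, Finset.sum_range_succ, Finset.sum_eq_zero]
    · simp
    · intro j hj
      rw [Nat.choose_eq_zero_of_lt (Finset.mem_range.1 hj)]
      simp

lemma diff_coeff (h : ℝ) (Q : Polynomial ℝ) (k : ℕ) (hQ : Q.natDegree ≤ k + 1) :
    (Polynomial.taylor h Q - Q).coeff k = (k + 1) * Q.coeff (k + 1) * h := by
  rw [Polynomial.coeff_sub, taylor_coeff_sum h Q (k + 1) hQ, Finset.sum_range_succ,
    Finset.sum_range_succ, Finset.sum_eq_zero]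
  · simp
  · intro j hj
    rw [Nat.choose_eq_zero_of_lt (Finset.mem_range.1 hj)]
    simp

lemma lead_base (K : ℝ) (hK : 2 ≤ K) (N : ℕ) (hN : 1 ≤ N) (Q : Polynomial ℝ)
    (hQ : Q.natDegree ≤ 1)
    (hS : (N : ℝ) / K ≤ ‖∑ m ∈ range N, ee (Q.eval (m : ℝ))‖) :
    Near (Q.coeff 1) (K / N) := by
  refine ⟨round (Q.coeff 1), ?_⟩
  set θ := Q.coeff 1 - round (Q.coeff 1) with hθ
  have h1 : |θ| ≤ 1 / 2 := abs_sub_round _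
  have hN0 : (0 : ℝ) < N := by exact_mod_cast hN
  have hK0 : 0 < K := by linarith
  rcases eq_or_ne θ 0 with h0 | h0
  · rw [h0, abs_zero]; positivity
  have ht : 0 < |θ| := abs_pos.2 h0
  have h2 : ∀ m ∈ range N, ee (Q.eval (m : ℝ)) = ee (Q.coeff 0) * ee θ ^ m := by
    intro m _
    have : Q.eval (m : ℝ) = Q.coeff 0 + m * θ + ((m * round (Q.coeff 1) : ℤ) : ℝ) := by
      rw [Polynomial.eval_eq_sum_range' (n := 2) (by omega), hθ]
      simp [Finset.sum_range_succ]
      ring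
    rw [this, ee_add, ee_add, ee_int, ee_nat_mul, mul_one]
  rw [Finset.sum_congr rfl h2, ← Finset.mul_sum, norm_mul, ee_norm, one_mul] at hS
  have h3 := ee_lower θ h1
  have h4 : 0 < ‖ee θ - 1‖ := by linarith
  have hne : ee θ ≠ 1 := by
    intro h; rw [h] at h4; simp at h4
  rw [geom_sum_eq hne, norm_div, le_div_iff₀ h4] at hS
  have h5 : ‖ee θ ^ N - 1‖ ≤ 2 := by
    refine (norm_sub_le _ _).trans ?_
    rw [norm_pow, ee_norm]; norm_num
  rw [le_div_iff₀ hN0]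
  have h6 : (N : ℝ) / K * (4 * |θ|) ≤ 2 := by
    have : (N : ℝ) / K * (4 * |θ|) ≤ (N : ℝ) / K * ‖ee θ - 1‖ := by gcongr
    linarith
  rw [div_mul_eq_mul_div, div_le_iff₀ hK0] at h6
  linarith

lemma norm_sum_ee_le (N : ℕ) (f : ℕ → ℝ) : ‖∑ m ∈ range N, ee (f m)‖ ≤ N := by
  refine (norm_sum_le _ _).trans ?_
  simp [ee_norm]

lemma lead (k : ℕ) : ∃ A : ℕ, ∀ K : ℝ, 2 ≤ K → ∀ N : ℕ, 1 ≤ N → ∀ Q : Polynomial ℝ,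
    Q.natDegree ≤ k + 1 → (N : ℝ) / K ≤ ‖∑ m ∈ range N, ee (Q.eval (m : ℝ))‖ →
    ∃ q : ℕ, 1 ≤ q ∧ (q : ℝ) ≤ K ^ A ∧ Near (q * Q.coeff (k + 1)) (K ^ A / (N : ℝ) ^ (k + 1)) := by
  induction k with
  | zero =>
    refine ⟨1, fun K hK N hN Q hQ hS => ⟨1, le_rfl, ?_, ?_⟩⟩
    · simp; linarith
    · simpa using lead_base K hK N hN Q (by simpa using hQ) hS
  | succ k ih =>
    obtain ⟨A, ih⟩ := ih
    set B := 8 * A + 4 * k + 14 with hB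
    refine ⟨B * (k + 2) + (12 * A + 4 * k + 16) + (8 * A + k + 7), fun K hK N hN Q hQ hS => ?_⟩
    set A' := B * (k + 2) + (12 * A + 4 * k + 16) + (8 * A + k + 7) with hA'
    have hK0 : 0 < K := by linarith
    have hK1 : 1 ≤ K := by linarith
    have hN0 : (0 : ℝ) < N := by exact_mod_cast hN
    have hN1 : (1 : ℝ) ≤ N := by exact_mod_cast hN
    have hpow : ∀ n : ℕ, (2 : ℝ) ^ n ≤ K ^ n := fun n => by gcongr
    have hmono : ∀ a b : ℕ, a ≤ b → K ^ a ≤ K ^ b := fun a b h => pow_le_pow_right₀ hK1 h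
    rcases lt_or_ge (N : ℝ) (K ^ B) with hsm | hbig
    · refine ⟨1, le_rfl, ?_, ?_⟩
      · simpa using one_le_pow₀ hK1
      · refine (near_half _).mono ?_
        have h1 : (N : ℝ) ^ (k + 1 + 1) ≤ K ^ A' := by
          calc (N : ℝ) ^ (k + 1 + 1) ≤ (K ^ B) ^ (k + 2) := by gcongr
            _ = K ^ (B * (k + 2)) := by rw [pow_mul]
            _ ≤ K ^ A' := hmono _ _ (by omega)
        have : 1 ≤ K ^ A' / (N : ℝ) ^ (k + 1 + 1) := by
          rw [le_div_iff₀ (by positivity)]; linarith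
        linarith
    -- differencing
    set T : ℕ → ℝ := fun h => ‖∑ m ∈ range (N - h),
      ee ((Polynomial.taylor (h : ℝ) Q - Q).eval (m : ℝ))‖ with hT
    have hvdc : ((N : ℝ) / K) ^ 2 ≤ 2 * ∑ h ∈ range N, T h := by
      have h1 := vdc (fun m => ee (Q.eval (m : ℝ))) (fun n => ee_norm _) N
      have h2 : ((N : ℝ) / K) ^ 2 ≤ ‖∑ m ∈ range N, ee (Q.eval (m : ℝ))‖ ^ 2 := by gcongr
      refine h2.trans (h1.trans (le_of_eq ?_))
      congr 1
      apply Finset.sum_congr rfl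
      intro h _
      rw [hT]
      simp only
      congr 1
      apply Finset.sum_congr rfl
      intro m _
      rw [ee_conj, ← ee_add, Polynomial.eval_sub, Polynomial.taylor_eval]
      push_cast
      rfl
    have hTN : ∀ h, T h ≤ (N - h : ℕ) := fun h => norm_sum_ee_le _ _
    set H := (range N).filter (fun h => (N : ℝ) / (4 * K ^ 2) ≤ T h) with hH
    have hHcard : (N : ℝ) / (4 * K ^ 2) ≤ H.card := by
      have h1 : ∑ h ∈ range N, T h ≤ H.card * N + N * (N / (4 * K ^ 2)) := by
        rw [← Finset.sum_filter_add_sum_filter_not (range N)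
          (fun h => (N : ℝ) / (4 * K ^ 2) ≤ T h)]
        apply add_le_add
        · rw [← nsmul_eq_mul]
          apply Finset.sum_le_card_nsmul
          intro h _
          refine (hTN h).trans ?_
          exact_mod_cast Nat.sub_le _ _
        · have : ∑ h ∈ (range N).filter (fun h => ¬ (N : ℝ) / (4 * K ^ 2) ≤ T h), T h
              ≤ ((range N).filter (fun h => ¬ (N : ℝ) / (4 * K ^ 2) ≤ T h)).card •
                ((N : ℝ) / (4 * K ^ 2)) := by
            apply Finset.sum_le_card_nsmul
            intro h hh
            exact (not_le.1 (Finset.mem_filter.1 hh).2).le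
          refine this.trans ?_
          rw [nsmul_eq_mul]
          gcongr
          have := Finset.card_filter_le (range N) (fun h => ¬ (N : ℝ) / (4 * K ^ 2) ≤ T h)
          rwa [card_range] at this
      have h2 : ((N : ℝ) / K) ^ 2 = 4 * N * (N / (4 * K ^ 2)) := by field_simp
      have h3 : N * (N / (4 * K ^ 2)) ≤ N * (H.card : ℝ) := by linarith
      exact le_of_mul_le_mul_left h3 hN0
    have h4K : (N : ℝ) / K ^ 4 ≤ N / (4 * K ^ 2) := by
      apply div_le_div_of_nonneg_left hN0.le (by positivity)
      have := hpow 2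
      nlinarith [sq_nonneg K]
    set ε := K ^ (4 * A + 4 * (k + 1)) / (N : ℝ) ^ (k + 1) with hε
    have hq : ∀ h ∈ H, ∃ q : ℕ, 1 ≤ q ∧ (q : ℝ) ≤ K ^ (4 * A) ∧
        Near (q * ((k + 2) * Q.coeff (k + 2) * h)) ε := by
      intro h hh
      obtain ⟨hr, hTh⟩ := Finset.mem_filter.1 hh
      have hr := Finset.mem_range.1 hr
      have hNh : 1 ≤ N - h := by omega
      have hNh' : (0 : ℝ) < (N - h : ℕ) := by exact_mod_cast hNh
      have hle : ((N - h : ℕ) : ℝ) ≤ N := by exact_mod_cast Nat.sub_le _ _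
      obtain ⟨q, q1, q2, q3⟩ := ih (K ^ 4) (by have := hpow 4; linarith) (N - h) hNh
        (Polynomial.taylor (h : ℝ) Q - Q) (diff_natDegree _ _ _ hQ) (by
          refine le_trans ?_ (h4K.trans hTh)
          gcongr)
      refine ⟨q, q1, by rwa [pow_mul], ?_⟩
      rw [diff_coeff _ _ _ hQ] at q3
      convert q3.mono ?_ using 3
      · push_cast; ring
      · rw [← pow_mul]
        have hb : (N : ℝ) ≤ K ^ 4 * (N - h : ℕ) := by
          have := h4K.trans (hTh.trans (hTN h))
          rwa [div_le_iff₀' (by positivity)] at this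
        rw [div_le_div_iff₀ (by positivity) (by positivity)]
        calc K ^ (4 * A) * (N : ℝ) ^ (k + 1) ≤ K ^ (4 * A) * (K ^ 4 * (N - h : ℕ)) ^ (k + 1) := by
              gcongr
          _ = _ := by rw [mul_pow, pow_add K (4 * A), pow_mul K 4 (k + 1)]; ring
    choose! qf hq1 hq2 hq3 using hq
    obtain ⟨q, hqm, hqc⟩ := Finset.exists_le_card_fiber_of_nsmul_le_card_of_maps_to
      (s := H) (t := Finset.Icc 1 ⌊K ^ (4 * A)⌋₊) (f := qf) (b := (N : ℝ) / K ^ (4 * A + 4))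
      (by
        intro h hh
        exact Finset.mem_Icc.2 ⟨hq1 h hh, Nat.le_floor (hq2 h hh)⟩)
      (by
        rw [Finset.nonempty_Icc]
        exact Nat.le_floor (by simpa using one_le_pow₀ hK1))
      (by
        rw [nsmul_eq_mul, Nat.card_Icc, Nat.add_sub_cancel]
        refine le_trans ?_ (h4K.trans hHcard)
        have : (⌊K ^ (4 * A)⌋₊ : ℝ) ≤ K ^ (4 * A) := Nat.floor_le (by positivity)
        calc (⌊K ^ (4 * A)⌋₊ : ℝ) * (N / K ^ (4 * A + 4))
            ≤ K ^ (4 * A) * (N / K ^ (4 * A + 4)) := by gcongr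
          _ = N / K ^ 4 := by rw [pow_add]; field_simp)
    obtain ⟨hqa, hqb⟩ := Finset.mem_Icc.1 hqm
    have hqb' : (q : ℝ) ≤ K ^ (4 * A) := (Nat.le_floor_iff (by positivity)).1 hqb
    have hKB : (K ^ (4 * A + 4)) = (K ^ (4 * A + 4)) := rfl
    obtain ⟨qq, q1, q2, q3⟩ := vino (K ^ (4 * A + 4))
      (by
        have := hmono 1 (4 * A + 4) (by omega)
        rw [pow_one] at this; linarith) N
      (by
        refine le_trans ?_ hbig
        calc 16 * (K ^ (4 * A + 4)) ^ 2 ≤ K ^ 4 * (K ^ (4 * A + 4)) ^ 2 := by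
              have := hpow 4; gcongr; linarith
          _ = K ^ (8 * A + 12) := by ring
          _ ≤ K ^ B := hmono _ _ (by omega))
      ε (q * ((k + 2) * Q.coeff (k + 2)))
      (by
        rw [hε, div_le_div_iff₀ (by positivity) (by positivity)]
        calc K ^ (4 * A + 4 * (k + 1)) * (64 * K ^ (4 * A + 4))
            ≤ K ^ (4 * A + 4 * (k + 1)) * (K ^ 6 * K ^ (4 * A + 4)) := by
              have := hpow 6; gcongr; linarith
          _ = K ^ B := by rw [hB]; ring
          _ ≤ N := hbig
          _ ≤ (N : ℝ) ^ (k + 1) := le_self_pow₀ hN1 (by omega)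
          _ = 1 * (N : ℝ) ^ (k + 1) := by ring)
      (H.filter (fun h => qf h = q))
      (by
        intro h hh
        exact (Finset.mem_filter.1 (Finset.mem_filter.1 hh).1).1) hqc
      (by
        intro h hh
        obtain ⟨e1, e2⟩ := Finset.mem_filter.1 hh
        have := hq3 h e1
        rw [e2] at this
        convert this using 1
        ring)
    refine ⟨qq * q * (k + 2), ?_, ?_, ?_⟩
    · have : 0 < qq * q * (k + 2) := by positivity
      exact this
    · push_cast
      have hk : (k : ℝ) + 2 ≤ K ^ (k + 2) := by
        refine le_trans ?_ (hpow _)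
        exact_mod_cast (Nat.lt_two_pow_self (n := k + 2)).le
      have h2K : 2 * K ^ (4 * A + 4) ≤ K ^ (4 * A + 5) := by
        rw [pow_succ K (4 * A + 4), mul_comm]; gcongr
      calc (qq : ℝ) * q * (k + 2) ≤ K ^ (4 * A + 5) * K ^ (4 * A) * K ^ (k + 2) := by
            gcongr; linarith
        _ = K ^ (8 * A + k + 7) := by ring
        _ ≤ K ^ A' := hmono _ _ (by omega)
    · convert q3.mono ?_ using 1
      · push_cast; ring
      · rw [hε, div_le_div_iff₀ (by positivity) (by positivity)]
        have : 16 * (K ^ (4 * A + 4)) ^ 2 * K ^ (4 * A + 4 * (k + 1)) ≤ K ^ A' := by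
          calc 16 * (K ^ (4 * A + 4)) ^ 2 * K ^ (4 * A + 4 * (k + 1))
              ≤ K ^ 4 * (K ^ (4 * A + 4)) ^ 2 * K ^ (4 * A + 4 * (k + 1)) := by
                have := hpow 4; gcongr; linarith
            _ = K ^ (12 * A + 4 * k + 16) := by ring
            _ ≤ K ^ A' := hmono _ _ (by omega)
        rw [mul_div_assoc', div_mul_eq_mul_div, div_le_iff₀ (by positivity)]
        calc _ ≤ K ^ A' * (N : ℝ) ^ (k + 1 + 1) := by gcongr
          _ = _ := by ring


lemma shift_le (f : ℕ → ℂ) (hf : ∀ n, ‖f n‖ = 1) (N s : ℕ) :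
    ‖∑ m ∈ range N, f (m + s) - ∑ m ∈ range N, f m‖ ≤ 2 * s := by
  have h1 : ∑ m ∈ range (N + s), f m = ∑ m ∈ range N, f m + ∑ m ∈ range s, f (N + m) :=
    Finset.sum_range_add _ _ _
  have h2 : ∑ m ∈ range (s + N), f m = ∑ m ∈ range s, f m + ∑ m ∈ range N, f (s + m) :=
    Finset.sum_range_add _ _ _
  have h3 : ∑ m ∈ range N, f (m + s) - ∑ m ∈ range N, f m
      = ∑ m ∈ range s, f (N + m) - ∑ m ∈ range s, f m := by
    simp_rw [add_comm _ s]
    rw [add_comm N s] at h1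
    rw [h1] at h2
    linear_combination h2.symm
  rw [h3]
  have h4 : ∀ g : ℕ → ℂ, (∀ n, ‖g n‖ = 1) → ‖∑ m ∈ range s, g m‖ ≤ s := by
    intro g hg
    refine (norm_sum_le _ _).trans ?_
    simp [hg]
  have := norm_sub_le (∑ m ∈ range s, f (N + m)) (∑ m ∈ range s, f m)
  have h5 := h4 (fun m => f (N + m)) (fun n => hf _)
  have h6 := h4 f hf
  linarith

lemma avg (f : ℕ → ℂ) (hf : ∀ n, ‖f n‖ = 1) (N q L : ℕ) (hN : 1 ≤ N) :
    ∃ m < N, L * (‖∑ m ∈ range N, f m‖ - 2 * q * L) / N ≤ ‖∑ t ∈ range L, f (m + q * t)‖ := by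
  have hN0 : (0 : ℝ) < N := by exact_mod_cast hN
  set S0 := ∑ m ∈ range N, f m with hS0
  have h1 : L * (‖S0‖ - 2 * q * L) ≤ ‖∑ t ∈ range L, ∑ m ∈ range N, f (m + q * t)‖ := by
    have h2 : ‖∑ t ∈ range L, (∑ m ∈ range N, f (m + q * t) - S0)‖ ≤ L * (2 * q * L) := by
      have hc : (L : ℝ) * (2 * q * L) = ∑ _t ∈ range L, (2 * q * L : ℝ) := by simp
      rw [hc]
      refine norm_sum_le_of_le _ ?_
      intro t ht
      have ht' : (t : ℝ) ≤ L := by exact_mod_cast (Finset.mem_range.1 ht).le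
      refine (shift_le f hf N (q * t)).trans ?_
      push_cast
      have : (q : ℝ) * t ≤ q * L := by gcongr
      linarith
    rw [Finset.sum_sub_distrib, Finset.sum_const, card_range, nsmul_eq_mul] at h2
    have h3 := norm_sub_norm_le (L * S0) (∑ t ∈ range L, ∑ m ∈ range N, f (m + q * t))
    rw [norm_sub_rev, norm_mul, Complex.norm_natCast] at h3
    linarith
  rw [Finset.sum_comm] at h1
  have h4 := h1.trans (norm_sum_le _ _)
  obtain ⟨m, hm, h5⟩ := Finset.exists_le_of_sum_le (s := range N)
    (f := fun _ => L * (‖S0‖ - 2 * q * L) / (N : ℝ))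
    (g := fun m => ‖∑ t ∈ range L, f (m + q * t)‖) ⟨0, Finset.mem_range.2 hN⟩ (by
      rw [Finset.sum_const, card_range, nsmul_eq_mul]
      rwa [mul_div_cancel₀ _ hN0.ne'])
  exact ⟨m, Finset.mem_range.1 hm, h5⟩

set_option maxHeartbeats 1000000 in
lemma full (k : ℕ) : ∃ A : ℕ, ∀ K : ℝ, 2 ≤ K → ∀ N : ℕ, 1 ≤ N → ∀ Q : Polynomial ℝ,
    Q.natDegree ≤ k → (N : ℝ) / K ≤ ‖∑ m ∈ range N, ee (Q.eval (m : ℝ))‖ →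
    ∃ q : ℕ, 1 ≤ q ∧ (q : ℝ) ≤ K ^ A ∧
      ∀ i, 1 ≤ i → i ≤ k → Near (q * Q.coeff i) (K ^ A / (N : ℝ) ^ i) := by
  induction k with
  | zero =>
    exact ⟨0, fun K hK N hN Q hQ hS => ⟨1, le_rfl, by simp, fun i h1 h2 => by omega⟩⟩
  | succ k ih =>
    obtain ⟨A2, ih⟩ := ih
    obtain ⟨A1, hlead⟩ := lead k
    set B := A1 + 2 * k + 8 with hB
    set D := 3 * A2 + (B + 1) * k with hD
    set E := D + 2 * k + 1 + A1 * (k + 1) with hE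
    refine ⟨B * (k + 1) + E + (A1 * (k + 1) + 3 * A2), fun K hK N hN Q hQ hS => ?_⟩
    set A := B * (k + 1) + E + (A1 * (k + 1) + 3 * A2) with hA
    have hK0 : 0 < K := by linarith
    have hK1 : 1 ≤ K := by linarith
    have hN0 : (0 : ℝ) < N := by exact_mod_cast hN
    have hN1 : (1 : ℝ) ≤ N := by exact_mod_cast hN
    have hpow : ∀ n : ℕ, (2 : ℝ) ^ n ≤ K ^ n := fun n => by gcongr
    have hmono : ∀ a b : ℕ, a ≤ b → K ^ a ≤ K ^ b := fun a b h => pow_le_pow_right₀ hK1 h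
    have hkK : (k : ℝ) + 1 ≤ K ^ (k + 1) := by
      refine le_trans ?_ (hpow _)
      exact_mod_cast (Nat.lt_two_pow_self (n := k + 1)).le
    rcases lt_or_ge (N : ℝ) (K ^ B) with hsm | hbig
    · refine ⟨1, le_rfl, by simpa using one_le_pow₀ hK1, fun i hi1 hi2 => ?_⟩
      refine (near_half _).mono ?_
      have h1 : (N : ℝ) ^ i ≤ K ^ A := by
        calc (N : ℝ) ^ i ≤ (N : ℝ) ^ (k + 1) := pow_le_pow_right₀ hN1 hi2
          _ ≤ (K ^ B) ^ (k + 1) := by gcongr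
          _ = K ^ (B * (k + 1)) := by rw [pow_mul]
          _ ≤ K ^ A := hmono _ _ (by omega)
      have : 1 ≤ K ^ A / (N : ℝ) ^ i := by
        rw [le_div_iff₀ (by positivity)]; linarith
      linarith
    obtain ⟨q, hq1, hq2, p, hp⟩ := hlead K hK N hN Q hQ hS
    set α := Q.coeff (k + 1) with hα
    set η := q * α - p with hη
    have hq0 : (0 : ℝ) < q := by exact_mod_cast hq1
    set x := (N : ℝ) / K ^ B with hx
    have hx1 : 1 ≤ x := by rw [hx, le_div_iff₀ (by positivity)]; linarith
    set L := ⌊x⌋₊ with hL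
    have hL1 : 1 ≤ L := Nat.le_floor (by simpa using hx1)
    have hL2 : (L : ℝ) ≤ x := Nat.floor_le (by linarith)
    have hL0 : (0 : ℝ) < L := by exact_mod_cast hL1
    have hL1' : (1 : ℝ) ≤ L := by exact_mod_cast hL1
    have hL3 : x ≤ K * L := by
      have : x < L + 1 := Nat.lt_floor_add_one x
      nlinarith
    have hLN : (N : ℝ) ≤ K ^ (B + 1) * L := by
      rw [hx, div_le_iff₀ (by positivity)] at hL3
      calc (N : ℝ) ≤ K * L * K ^ B := hL3
        _ = _ := by ring
    have hqL : 4 * K * (q * L) ≤ N := by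
      calc 4 * K * (q * L) ≤ K ^ 2 * K * (K ^ A1 * x) := by
            have := hpow 2
            gcongr; linarith
        _ = K ^ (A1 + 3) * x := by ring
        _ ≤ K ^ B * x := by have := hmono (A1 + 3) B (by omega); gcongr
        _ = N := by rw [hx]; field_simp
    have hqLN : (q : ℝ) * L ≤ N := by
      have : 0 ≤ (q : ℝ) * L := by positivity
      nlinarith
    obtain ⟨m0, hm0, havg⟩ := avg (fun m => ee (Q.eval (m : ℝ))) (fun n => ee_norm _) N q L hN
    have hm0' : (m0 : ℝ) ≤ N := by exact_mod_cast hm0.le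
    have havg2 : (L : ℝ) / (2 * K) ≤ ‖∑ t ∈ range L, ee (Q.eval ((m0 + q * t : ℕ) : ℝ))‖ := by
      refine le_trans ?_ havg
      have h1 : (N : ℝ) / (2 * K) ≤ ‖∑ m ∈ range N, ee (Q.eval (m : ℝ))‖ - 2 * q * L := by
        have h2 : 2 * q * L ≤ (N : ℝ) / (2 * K) := by
          rw [le_div_iff₀ (by positivity)]; linarith
        have h3 : (N : ℝ) / K = N / (2 * K) + N / (2 * K) := by field_simp; norm_num
        linarith
      calc (L : ℝ) / (2 * K) = L * (N / (2 * K)) / N := by field_simp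
        _ ≤ _ := by gcongr
    set Q' := Q - Polynomial.monomial (k + 1) α with hQ'
    have hQ'd : Q'.natDegree ≤ k := by
      rw [Polynomial.natDegree_le_iff_coeff_eq_zero]
      intro i hi
      rw [hQ', Polynomial.coeff_sub, Polynomial.coeff_monomial]
      rcases eq_or_ne (k + 1) i with h | h
      · rw [if_pos h, ← h, sub_self]
      · rw [if_neg h, sub_zero, Polynomial.coeff_eq_zero_of_natDegree_lt (by omega)]
    set U := Polynomial.taylor (m0 : ℝ) Q' with hU
    have hUd : U.natDegree ≤ k := by rw [hU, Polynomial.natDegree_taylor]; exact hQ'd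
    set R := U.comp (Polynomial.C (q : ℝ) * Polynomial.X) with hR
    have hRc : ∀ j, R.coeff j = U.coeff j * (q : ℝ) ^ j := fun j =>
      Polynomial.comp_C_mul_X_coeff
    have hRd : R.natDegree ≤ k := by
      rw [Polynomial.natDegree_le_iff_coeff_eq_zero]
      intro i hi
      rw [hRc, Polynomial.coeff_eq_zero_of_natDegree_lt (by omega), zero_mul]
    have hReval : ∀ t : ℕ, Q.eval ((m0 + q * t : ℕ) : ℝ)
        = R.eval (t : ℝ) + α * ((m0 + q * t : ℕ) : ℝ) ^ (k + 1) := by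
      intro t
      rw [hR, Polynomial.eval_comp, hU, Polynomial.taylor_eval, hQ']
      simp only [Polynomial.eval_sub, Polynomial.eval_monomial, Polynomial.eval_mul,
        Polynomial.eval_C, Polynomial.eval_X]
      push_cast
      rw [add_comm (m0 : ℝ) (q * t)]
      ring
    -- comparison
    have hcomp : ∀ t ∈ range L, ‖ee (Q.eval ((m0 + q * t : ℕ) : ℝ))
        - ee (α * (m0 : ℝ) ^ (k + 1)) * ee (R.eval (t : ℝ))‖ ≤ 1 / (4 * K) := by
      intro t ht
      have htL : (t : ℝ) ≤ L := by exact_mod_cast (Finset.mem_range.1 ht).le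
      set m := m0 + q * t with hm
      have hm2 : (m : ℝ) ≤ 2 * N := by
        have : (q : ℝ) * t ≤ q * L := by gcongr
        rw [hm]; push_cast; linarith
      set w : ℕ := t * ∑ i ∈ range (k + 1), m ^ i * m0 ^ (k - i) with hw
      have hwid : ((m : ℝ) ^ (k + 1) - (m0 : ℝ) ^ (k + 1)) = q * w := by
        rw [← geom_sum₂_mul, hw]
        push_cast
        have : (m : ℝ) - m0 = q * t := by rw [hm]; push_cast; ring
        rw [this]
        ring
      have hwle : (w : ℝ) ≤ L * ((k + 1) * (2 * N) ^ k) := by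
        rw [hw]
        push_cast
        gcongr
        have : ∀ i ∈ range (k + 1), (m : ℝ) ^ i * (m0 : ℝ) ^ (k - i) ≤ (2 * N) ^ k := by
          intro i hi
          have hi' : i ≤ k := by simpa [Nat.lt_succ_iff] using hi
          calc (m : ℝ) ^ i * (m0 : ℝ) ^ (k - i) ≤ (2 * N) ^ i * (2 * N) ^ (k - i) := by
                gcongr; linarith
            _ = (2 * N) ^ k := by rw [← pow_add]; congr 1; omega
        have := Finset.sum_le_card_nsmul _ _ _ this
        rwa [card_range, nsmul_eq_mul, Nat.cast_succ] at this
      have hid : Q.eval (m : ℝ) = (α * (m0 : ℝ) ^ (k + 1) + R.eval (t : ℝ)) + η * w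
          + ((p * w : ℤ) : ℝ) := by
        rw [hReval t, ← hm]
        have : α * (m : ℝ) ^ (k + 1) = α * (m0 : ℝ) ^ (k + 1) + α * (q * w) := by
          rw [← hwid]; ring
        rw [this, hη]
        push_cast
        ring
      rw [hid, ee_add _ ((p * w : ℤ) : ℝ), ee_int, mul_one, ← ee_add]
      refine (ee_sub_norm _ _).trans ?_
      rw [add_sub_cancel_left, abs_mul, Nat.abs_cast]
      have hpi : 2 * π ≤ K ^ 3 := by
        have := hpow 3
        have := Real.pi_le_four
        linarith
      calc 2 * π * (|η| * w)
          ≤ K ^ 3 * (K ^ A1 / (N : ℝ) ^ (k + 1) * (x * (K ^ (k + 1) * (K * N) ^ k))) := by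
            gcongr
            refine hwle.trans ?_
            gcongr
        _ = K ^ (A1 + 2 * k + 4) * x / N := by
            rw [mul_pow]; field_simp; ring
        _ = K ^ (A1 + 2 * k + 4) / K ^ B := by rw [hx]; field_simp
        _ = 1 / K ^ 4 := by
            have : K ^ B = K ^ (A1 + 2 * k + 4) * K ^ 4 := by rw [hB]; ring
            rw [this]
            field_simp
        _ ≤ 1 / (4 * K) := by
            apply div_le_div_of_nonneg_left zero_le_one (by positivity)
            have := hpow 3
            nlinarith
    have hRsum : (L : ℝ) / K ^ 3 ≤ ‖∑ t ∈ range L, ee (R.eval (t : ℝ))‖ := by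
      have h1 : ‖∑ t ∈ range L, (ee (Q.eval ((m0 + q * t : ℕ) : ℝ))
          - ee (α * (m0 : ℝ) ^ (k + 1)) * ee (R.eval (t : ℝ)))‖ ≤ L * (1 / (4 * K)) := by
        rw [← nsmul_eq_mul, ← card_range L, ← Finset.sum_const]
        rw [card_range L]
        exact norm_sum_le_of_le _ hcomp
      rw [Finset.sum_sub_distrib, ← Finset.mul_sum] at h1
      have h2 := (norm_sub_norm_le _ _).trans h1
      rw [norm_mul, ee_norm, one_mul] at h2
      have h3 : (L : ℝ) / (2 * K) = L * (1 / (4 * K)) + L * (1 / (4 * K)) := by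
        field_simp; norm_num
      have h4 : (L : ℝ) / K ^ 3 ≤ L * (1 / (4 * K)) := by
        rw [mul_one_div]
        apply div_le_div_of_nonneg_left hL0.le (by positivity)
        have := hpow 2
        nlinarith
      linarith
    obtain ⟨qq, hq1', hq2', hq3'⟩ := ih (K ^ 3) (by have := hpow 3; linarith) L hL1 R hRd hRsum
    rw [← pow_mul] at hq2' hq3'
    have hq0' : (0 : ℝ) < qq := by exact_mod_cast hq1'
    have hnear : ∀ j, 1 ≤ j → j ≤ k → Near (qq * R.coeff j) (K ^ D / (N : ℝ) ^ j) := by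
      intro j h1 h2
      refine (hq3' j h1 h2).mono ?_
      rw [div_le_div_iff₀ (by positivity) (by positivity)]
      calc K ^ (3 * A2) * (N : ℝ) ^ j ≤ K ^ (3 * A2) * (K ^ (B + 1) * L) ^ j := by gcongr
        _ = K ^ (3 * A2 + (B + 1) * j) * (L : ℝ) ^ j := by
            rw [mul_pow, pow_add K (3 * A2), ← pow_mul]; ring
        _ ≤ K ^ D * (L : ℝ) ^ j := by
            have := hmono (3 * A2 + (B + 1) * j) D (by
              rw [hD]; gcongr)
            gcongr
    have hqpow : ∀ n : ℕ, n ≤ k + 1 → (q : ℝ) ^ n ≤ K ^ (A1 * (k + 1)) := by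
      intro n hn
      calc (q : ℝ) ^ n ≤ (K ^ A1) ^ n := by gcongr
        _ = K ^ (A1 * n) := by rw [pow_mul]
        _ ≤ _ := hmono _ _ (by gcongr)
    refine ⟨q ^ (k + 1) * qq, ?_, ?_, ?_⟩
    · have : 0 < q ^ (k + 1) * qq := by positivity
      exact this
    · push_cast
      calc (q : ℝ) ^ (k + 1) * qq ≤ K ^ (A1 * (k + 1)) * K ^ (3 * A2) := by
            have := hqpow (k + 1) le_rfl
            gcongr
        _ = K ^ (A1 * (k + 1) + 3 * A2) := by rw [pow_add]
        _ ≤ K ^ A := hmono _ _ (by omega)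
    · intro i hi1 hi2
      rcases Nat.lt_or_ge k i with hik | hik
      · have : i = k + 1 := by omega
        subst this
        have h1 : Near (q * α) (K ^ A1 / (N : ℝ) ^ (k + 1)) := ⟨p, hp⟩
        convert (h1.nat_mul (q ^ k * qq)).mono ?_ using 1
        · rw [hα]; push_cast; ring
        · push_cast
          rw [mul_div_assoc']
          gcongr
          calc (q : ℝ) ^ k * qq * K ^ A1 ≤ (K ^ A1) ^ k * K ^ (3 * A2) * K ^ A1 := by gcongr
            _ = K ^ (A1 * (k + 1) + 3 * A2) := by rw [← pow_mul]; ring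
            _ ≤ K ^ A := hmono _ _ (by omega)
      · have hQi : Q.coeff i = Q'.coeff i := by
          rw [hQ', Polynomial.coeff_sub, Polynomial.coeff_monomial, if_neg (by omega), sub_zero]
        have hQU : Q' = Polynomial.taylor (-(m0 : ℝ)) U := by
          rw [hU, Polynomial.taylor_taylor]; simp
        have hexp : ((q ^ (k + 1) * qq : ℕ) : ℝ) * Q.coeff i
            = ∑ j ∈ range (k + 1), (((j.choose i : ℤ) * (-(m0 : ℤ)) ^ (j - i)
                * (q : ℤ) ^ (k + 1 - j) : ℤ) : ℝ) * (qq * R.coeff j) := by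
          rw [hQi, hQU, taylor_coeff_sum _ U k hUd, Finset.mul_sum]
          apply Finset.sum_congr rfl
          intro j hj
          have hj' : j < k + 1 := Finset.mem_range.1 hj
          rw [hRc]
          push_cast
          have : (q : ℝ) ^ (k + 1) = (q : ℝ) ^ (k + 1 - j) * (q : ℝ) ^ j := by
            rw [← pow_add]; congr 1; omega
          rw [this]
          ring
        rw [hexp]
        have hterm : ∀ j ∈ range (k + 1), Near ((((j.choose i : ℤ) * (-(m0 : ℤ)) ^ (j - i)
                * (q : ℤ) ^ (k + 1 - j) : ℤ) : ℝ) * (qq * R.coeff j))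
                (K ^ (k + A1 * (k + 1) + D) / (N : ℝ) ^ i) := by
          intro j hj
          have hj' : j ≤ k := by simpa [Nat.lt_succ_iff] using hj
          rcases Nat.lt_or_ge j i with hji | hji
          · rw [Nat.choose_eq_zero_of_lt hji]
            refine ⟨0, ?_⟩
            simp only [Nat.cast_zero, zero_mul, Int.cast_zero, sub_zero, abs_zero]
            positivity
          · refine ((hnear j (by omega) hj').int_mul _).mono ?_
            push_cast
            rw [abs_mul, abs_mul, abs_pow, abs_neg, abs_pow, Nat.abs_cast, Nat.abs_cast,
              Nat.abs_cast]
            have hch : (j.choose i : ℝ) ≤ K ^ k := by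
              calc (j.choose i : ℝ) ≤ (2 : ℝ) ^ j := by exact_mod_cast Nat.choose_le_two_pow j i
                _ ≤ K ^ j := hpow j
                _ ≤ K ^ k := hmono _ _ hj'
            calc (j.choose i : ℝ) * (m0 : ℝ) ^ (j - i) * (q : ℝ) ^ (k + 1 - j)
                  * (K ^ D / (N : ℝ) ^ j)
                ≤ K ^ k * (N : ℝ) ^ (j - i) * K ^ (A1 * (k + 1)) * (K ^ D / (N : ℝ) ^ j) := by
                  have := hqpow (k + 1 - j) (by omega)
                  gcongr
              _ = K ^ (k + A1 * (k + 1) + D) / (N : ℝ) ^ i := by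
                  have : (N : ℝ) ^ j = (N : ℝ) ^ (j - i) * (N : ℝ) ^ i := by
                    rw [← pow_add]; congr 1; omega
                  rw [this, pow_add K _ D, pow_add K k]
                  clear_value D
                  field_simp
        refine (Near.sum _ _ _ hterm).mono ?_
        rw [Finset.sum_const, card_range, nsmul_eq_mul, mul_div_assoc']
        gcongr
        push_cast
        calc ((k : ℝ) + 1) * K ^ (k + A1 * (k + 1) + D)
            ≤ K ^ (k + 1) * K ^ (k + A1 * (k + 1) + D) := by gcongr
          _ = K ^ E := by rw [← pow_add]; congr 1; rw [hE]; ring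
          _ ≤ K ^ A := hmono _ _ (by omega)


/-- periodised second Bernoulli polynomial -/
noncomputable def b2 (x : ℝ) : ℝ := Int.fract x ^ 2 - Int.fract x + 1 / 6

lemma b2_hasSum (x : ℝ) :
    HasSum (fun n : ℕ => 1 / (n : ℝ) ^ 2 * Real.cos (2 * π * n * x)) (π ^ 2 * b2 x) := by
  have h := hasSum_one_div_nat_pow_mul_cos (k := 1) one_ne_zero (x := Int.fract x)
    ⟨Int.fract_nonneg x, (Int.fract_lt_one x).le⟩
  convert h using 1
  · funext n
    congr 1
    have : 2 * π * n * x = 2 * π * n * Int.fract x + ((n * ⌊x⌋ : ℤ) : ℝ) * (2 * π) := by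
      have := Int.fract_add_floor x
      push_cast
      linear_combination (-(2 * π * n)) * this
    rw [this, Real.cos_add_int_mul_two_pi]
  · have h2 := bernoulliFun_two (Int.fract x)
    unfold bernoulliFun at h2
    rw [mul_one, h2]
    unfold b2
    have h3 : ((2 * 1).factorial : ℝ) = 2 := by norm_num [Nat.factorial]
    have h4 : ((2 : ℕ).factorial : ℝ) = 2 := by norm_num [Nat.factorial]
    simp only [h3, h4]
    ring

lemma b2_sum (M : ℕ) (x : ℕ → ℝ) (y : ℝ) :
    HasSum (fun n : ℕ => 1 / (n : ℝ) ^ 2 * ∑ m ∈ range M, Real.cos (2 * π * n * (x m - y)))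
      (π ^ 2 * ∑ m ∈ range M, b2 (x m - y)) := by
  simp_rw [Finset.mul_sum]
  exact hasSum_sum fun m _ => b2_hasSum (x m - y)

lemma cos_sum_le (M : ℕ) (x : ℕ → ℝ) (y : ℝ) (n : ℕ) :
    |∑ m ∈ range M, Real.cos (2 * π * n * (x m - y))| ≤ ‖∑ m ∈ range M, ee (n * x m)‖ := by
  have h1 : ∑ m ∈ range M, Real.cos (2 * π * n * (x m - y))
      = (ee (-(n * y)) * ∑ m ∈ range M, ee (n * x m)).re := by
    rw [Finset.mul_sum, Complex.re_sum]
    apply Finset.sum_congr rfl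
    intro m _
    rw [← ee_add]
    unfold ee
    rw [Complex.exp_ofReal_mul_I_re]
    congr 1
    ring
  rw [h1]
  refine (Complex.abs_re_le_norm _).trans ?_
  rw [norm_mul, ee_norm, one_mul]

lemma summ_Z : Summable (fun n : ℕ => Real.sqrt n / (n : ℝ) ^ 2) := by
  have := Real.summable_nat_rpow_inv (p := 3 / 2) |>.2 (by norm_num)
  refine this.congr ?_
  intro n
  rcases Nat.eq_zero_or_pos n with h | h
  · subst h; simp
  have hn : (0 : ℝ) < n := by exact_mod_cast h
  rw [Real.sqrt_eq_rpow, ← Real.rpow_natCast, ← Real.rpow_sub hn, ← Real.rpow_neg hn.le]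
  norm_num

lemma b2_bound (M : ℕ) (x : ℕ → ℝ) (E : ℝ)
    (h : ∀ n : ℕ, 1 ≤ n → ‖∑ m ∈ range M, ee (n * x m)‖ ≤ E * Real.sqrt n) (y : ℝ) :
    |∑ m ∈ range M, b2 (x m - y)| ≤ E * ∑' n : ℕ, Real.sqrt n / (n : ℝ) ^ 2 := by
  have h1 := tsum_of_norm_bounded (summ_Z.hasSum.mul_left E)
    (f := fun n : ℕ => 1 / (n : ℝ) ^ 2 * ∑ m ∈ range M, Real.cos (2 * π * n * (x m - y))) (by
      intro n
      rcases Nat.eq_zero_or_pos n with h0 | h0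
      · subst h0; simp
      have hn : (0 : ℝ) < n := by exact_mod_cast h0
      have h2 := (cos_sum_le M x y n).trans (h n h0)
      rw [norm_mul, Real.norm_eq_abs, Real.norm_eq_abs, abs_of_pos (by positivity)]
      calc _ ≤ 1 / (n : ℝ) ^ 2 * (E * Real.sqrt n) := by gcongr
        _ = _ := by ring)
  rw [(b2_sum M x y).tsum_eq, Real.norm_eq_abs, abs_mul, abs_of_pos (by positivity)] at h1
  refine le_trans ?_ h1
  have : 1 ≤ π ^ 2 := by nlinarith [Real.pi_gt_three]
  nlinarith [abs_nonneg (∑ m ∈ range M, b2 (x m - y))]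

lemma b2_up (x η : ℝ) (h0 : 0 ≤ η) (h1 : η < 1) :
    b2 (x + η) - b2 x ≤ 2 * η * (Int.fract x - 1 / 2) + η ^ 2 := by
  have hu0 := Int.fract_nonneg x
  have hu1 := Int.fract_lt_one x
  have hx := Int.fract_add_floor x
  unfold b2
  rcases lt_or_ge (Int.fract x + η) 1 with h | h
  · have : Int.fract (x + η) = Int.fract x + η :=
      Int.fract_eq_iff.2 ⟨by linarith, h, ⌊x⌋, by linarith⟩
    rw [this]; nlinarith
  · have : Int.fract (x + η) = Int.fract x + η - 1 :=
      Int.fract_eq_iff.2 ⟨by linarith, by linarith, ⌊x⌋ + 1, by push_cast; linarith⟩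
    rw [this]; nlinarith

lemma b2_down (x η : ℝ) (h0 : 0 ≤ η) (h1 : η < 1) :
    2 * η * (Int.fract x - 1 / 2) - η ^ 2 ≤ b2 x - b2 (x - η) := by
  have hu0 := Int.fract_nonneg x
  have hu1 := Int.fract_lt_one x
  have hx := Int.fract_add_floor x
  unfold b2
  rcases le_or_gt η (Int.fract x) with h | h
  · have : Int.fract (x - η) = Int.fract x - η :=
      Int.fract_eq_iff.2 ⟨by linarith, by linarith, ⌊x⌋, by linarith⟩
    rw [this]; nlinarith
  · have : Int.fract (x - η) = Int.fract x - η + 1 :=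
      Int.fract_eq_iff.2 ⟨by linarith, by linarith, ⌊x⌋ - 1, by push_cast; linarith⟩
    rw [this]; nlinarith

lemma saw_bound (M : ℕ) (x : ℕ → ℝ) (F η : ℝ) (h0 : 0 < η) (h1 : η < 1)
    (h : ∀ y, |∑ m ∈ range M, b2 (x m - y)| ≤ F) (y : ℝ) :
    |∑ m ∈ range M, (Int.fract (x m - y) - 1 / 2)| ≤ η * M / 2 + F / η := by
  set T := ∑ m ∈ range M, (Int.fract (x m - y) - 1 / 2) with hT
  have hup : ∑ m ∈ range M, b2 (x m - (y - η)) - ∑ m ∈ range M, b2 (x m - y)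
      ≤ 2 * η * T + M * η ^ 2 := by
    have : (M : ℝ) * η ^ 2 = ∑ _m ∈ range M, η ^ 2 := by simp
    rw [this, hT, Finset.mul_sum, ← Finset.sum_sub_distrib, ← Finset.sum_add_distrib]
    apply Finset.sum_le_sum
    intro m _
    have := b2_up (x m - y) η h0.le h1
    rwa [show x m - (y - η) = x m - y + η by ring]
  have hdown : 2 * η * T - M * η ^ 2
      ≤ ∑ m ∈ range M, b2 (x m - y) - ∑ m ∈ range M, b2 (x m - (y + η)) := by
    have : (M : ℝ) * η ^ 2 = ∑ _m ∈ range M, η ^ 2 := by simp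
    rw [this, hT, Finset.mul_sum, ← Finset.sum_sub_distrib, ← Finset.sum_sub_distrib]
    apply Finset.sum_le_sum
    intro m _
    have := b2_down (x m - y) η h0.le h1
    rwa [show x m - (y + η) = x m - y - η by ring]
  have a1 := abs_le.1 (h y)
  have a2 := abs_le.1 (h (y - η))
  have a3 := abs_le.1 (h (y + η))
  have e : η * M / 2 + F / η = (M * η ^ 2 + 2 * F) / (2 * η) := by field_simp
  rw [e, abs_le]
  constructor
  · rw [neg_le, le_div_iff₀ (by positivity)]
    nlinarith
  · rw [le_div_iff₀ (by positivity)]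
    nlinarith

lemma ind_eq (x c : ℝ) (hc0 : 0 < c) (hc1 : c ≤ 1) :
    (if Int.fract x < c then (1 : ℝ) else 0)
      = c + (Int.fract (x - c) - 1 / 2) - (Int.fract (x - 0) - 1 / 2) := by
  have hu0 := Int.fract_nonneg x
  have hu1 := Int.fract_lt_one x
  have hx := Int.fract_add_floor x
  rw [sub_zero]
  split_ifs with h
  · have : Int.fract (x - c) = Int.fract x - c + 1 :=
      Int.fract_eq_iff.2 ⟨by linarith, by linarith, ⌊x⌋ - 1, by push_cast; linarith⟩
    rw [this]; ring
  · have : Int.fract (x - c) = Int.fract x - c :=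
      Int.fract_eq_iff.2 ⟨by linarith, by linarith, ⌊x⌋, by linarith⟩
    rw [this]; ring

lemma disc : ∃ C : ℝ, 0 < C ∧ ∀ J : ℝ, 2 ≤ J → ∀ (M : ℕ) (x : ℕ → ℝ),
    (∀ h : ℕ, 1 ≤ h → (h : ℝ) ≤ J ^ 4 → ‖∑ m ∈ range M, ee (h * x m)‖ ≤ M / J ^ 4) →
    ∀ c : ℝ, 0 < c → c ≤ 1 →
      |(((range M).filter (fun m => Int.fract (x m) < c)).card : ℝ) - c * M| ≤ C * (M / J) := by
  set Z := ∑' n : ℕ, Real.sqrt n / (n : ℝ) ^ 2 with hZ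
  have hZ0 : 0 ≤ Z := tsum_nonneg fun n => by positivity
  refine ⟨1 + 2 * Z, by linarith, fun J hJ M x hx c hc0 hc1 => ?_⟩
  have hJ0 : 0 < J := by linarith
  have hJ2 : 1 ≤ J ^ 2 := by nlinarith
  have hM0 : (0 : ℝ) ≤ M := Nat.cast_nonneg _
  have hE : ∀ n : ℕ, 1 ≤ n → ‖∑ m ∈ range M, ee (n * x m)‖ ≤ M / J ^ 2 * Real.sqrt n := by
    intro n hn
    have hn1 : (1 : ℝ) ≤ n := by exact_mod_cast hn
    rcases le_or_gt (n : ℝ) (J ^ 4) with h | h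
    · have h1 : 1 ≤ Real.sqrt n := by rw [Real.one_le_sqrt]; exact hn1
      calc _ ≤ M / J ^ 4 := hx n hn h
        _ ≤ M / J ^ 2 := by
          apply div_le_div_of_nonneg_left hM0 (by positivity)
          nlinarith
        _ ≤ _ := le_mul_of_one_le_right (by positivity) h1
    · have h1 : J ^ 2 ≤ Real.sqrt n := by
        apply Real.le_sqrt_of_sq_le
        have h5 : (J ^ 2) ^ 2 = J ^ 4 := by ring
        rw [h5]
        exact h.le
      calc _ ≤ (M : ℝ) := norm_sum_ee_le _ _
        _ = M / J ^ 2 * J ^ 2 := by field_simp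
        _ ≤ _ := by gcongr
  have hb := b2_bound M x _ hE
  have hs := saw_bound M x _ (1 / J) (by positivity) (by rw [div_lt_one hJ0]; linarith) hb
  have h1 := hs c
  have h2 := hs 0
  have hcount : (((range M).filter (fun m => Int.fract (x m) < c)).card : ℝ)
      = c * M + ∑ m ∈ range M, (Int.fract (x m - c) - 1 / 2)
        - ∑ m ∈ range M, (Int.fract (x m - 0) - 1 / 2) := by
    rw [Finset.card_filter]
    push_cast
    have e : c * (M : ℝ) = ∑ _m ∈ range M, c := by simp [mul_comm]
    rw [e, ← Finset.sum_add_distrib, ← Finset.sum_sub_distrib]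
    exact Finset.sum_congr rfl fun m _ => ind_eq (x m) c hc0 hc1
  rw [← hZ] at h1 h2
  have e : 1 / J * M / 2 + M / J ^ 2 * Z / (1 / J) = (1 / 2 + Z) * (M / J) := by field_simp
  rw [e] at h1 h2
  rw [hcount, show c * M + ∑ m ∈ range M, (Int.fract (x m - c) - 1 / 2)
        - ∑ m ∈ range M, (Int.fract (x m - 0) - 1 / 2) - c * M
      = ∑ m ∈ range M, (Int.fract (x m - c) - 1 / 2)
        - ∑ m ∈ range M, (Int.fract (x m - 0) - 1 / 2) by ring]
  refine (abs_sub _ _).trans ?_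
  linarith

lemma dvd_iff (d : ℕ) (hd : 0 < d) (y : ℝ) :
    (d : ℤ) ∣ ⌊y⌋ ↔ Int.fract (y / d) < 1 / d := by
  have hd0 : (0 : ℝ) < d := by exact_mod_cast hd
  have hd1 : (1 : ℝ) ≤ d := by exact_mod_cast hd
  constructor
  · rintro ⟨k, hk⟩
    have hy := Int.fract_add_floor y
    have f0 := Int.fract_nonneg y
    have f1 := Int.fract_lt_one y
    have : Int.fract (y / d) = Int.fract y / d := by
      rw [Int.fract_eq_iff]
      refine ⟨by positivity, ?_, k, ?_⟩
      · rw [div_lt_one hd0]; linarith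
      · rw [hk] at hy
        push_cast at hy
        field_simp
        linarith
    rw [this]
    gcongr
  · intro h
    refine ⟨⌊y / d⌋, ?_⟩
    have hy := Int.fract_add_floor (y / d)
    have f0 := Int.fract_nonneg (y / d)
    rw [lt_div_iff₀ hd0] at h
    have hy' : y = Int.fract (y / d) * d + d * ⌊y / d⌋ := by
      have e : y = (y / d) * d := by field_simp
      linear_combination e - (d : ℝ) * hy
    rw [Int.floor_eq_iff]
    push_cast
    constructor
    · nlinarith [mul_nonneg f0 hd0.le]
    · linarith

lemma AP_card (P : Polynomial ℝ) (d : ℕ) (hd : 0 < d) (X : ℝ) :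
    |((AP P d X).card : ℝ) - (((range ⌊X / d⌋₊).filter
      (fun m : ℕ => Int.fract (P.eval ((d : ℝ) * m) / d) < 1 / d)).card : ℝ)| ≤ 1 := by
  classical
  set M := ⌊X / d⌋₊ with hM
  have hM' : M = ⌊X⌋₊ / d := Nat.floor_div_natCast _ _
  set p : ℕ → Prop := fun m : ℕ => Int.fract (P.eval ((d : ℝ) * m) / d) < 1 / d with hp
  have h1 : AP P d X = ((Icc 1 M).filter p).image (fun m => d * m) := by
    ext x
    unfold AP
    simp only [Finset.mem_filter, Finset.mem_image, Finset.mem_Icc, hp]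
    constructor
    · rintro ⟨⟨hx1, hx2⟩, h3, h4⟩
      obtain ⟨m, rfl⟩ := Int.natCast_dvd_natCast.1 h3
      refine ⟨m, ⟨⟨?_, ?_⟩, ?_⟩, rfl⟩
      · exact Nat.pos_of_mul_pos_left hx1
      · rw [hM', Nat.le_div_iff_mul_le hd, mul_comm]; exact hx2
      · rw [← dvd_iff d hd]
        push_cast at h4
        exact h4
    · rintro ⟨m, ⟨⟨hm1, hm2⟩, h3⟩, rfl⟩
      refine ⟨⟨Nat.mul_pos hd hm1, ?_⟩, ?_, ?_⟩
      · rw [hM', Nat.le_div_iff_mul_le hd, mul_comm] at hm2; exact hm2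
      · exact Int.natCast_dvd_natCast.2 (Nat.dvd_mul_right _ _)
      · rw [← dvd_iff d hd] at h3
        push_cast
        exact h3
  rw [h1, Finset.card_image_of_injective _ (fun a b h => Nat.eq_of_mul_eq_mul_left hd h)]
  have h2 : ((Icc 1 M).filter p).card ≤ ((range M).filter p).card + 1 := by
    refine (Finset.card_le_card ?_).trans (Finset.card_insert_le M _)
    intro m hm
    simp only [Finset.mem_filter, Finset.mem_Icc, Finset.mem_insert, Finset.mem_range] at hm ⊢
    rcases Nat.lt_or_ge m M with h | h
    · exact Or.inr ⟨h, hm.2⟩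
    · exact Or.inl (by omega)
  have h3 : ((range M).filter p).card ≤ ((Icc 1 M).filter p).card + 1 := by
    refine (Finset.card_le_card ?_).trans (Finset.card_insert_le 0 _)
    intro m hm
    simp only [Finset.mem_filter, Finset.mem_Icc, Finset.mem_insert, Finset.mem_range] at hm ⊢
    rcases Nat.eq_zero_or_pos m with h | h
    · exact Or.inl h
    · exact Or.inr ⟨⟨h, hm.1.le⟩, hm.2⟩
  have h2' : (((Icc 1 M).filter p).card : ℝ) ≤ ((range M).filter p).card + 1 := by exact_mod_cast h2
  have h3' : (((range M).filter p).card : ℝ) ≤ ((Icc 1 M).filter p).card + 1 := by exact_mod_cast h3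
  rw [abs_le]
  constructor <;> linarith

theorem statement3 (P : Polynomial ℝ) (hP : ¬ IsLiouvilleReal (P.coeff 1)) :
    ∃ μ : ℝ, μ ∈ Set.Ioo (0 : ℝ) 1 ∧ ∃ C > (0 : ℝ), ∃ C₀ > (0 : ℝ),
      ∀ d : ℕ, 0 < d → ∀ X : ℝ, X / (d : ℝ) > C →
        |((AP P d X).card : ℝ) - X / (d : ℝ) ^ 2| ≤ C₀ * (X / (d : ℝ)) ^ (1 - μ) := by
  obtain ⟨C₁, hC₁, hdisc⟩ := disc
  obtain ⟨A, hfull⟩ := full (P.natDegree + 1)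
  unfold IsLiouvilleReal at hP
  push Not at hP
  obtain ⟨n, hn⟩ := hP
  set G := A + 1 + (A + 2) * n with hG
  have hG0 : (0 : ℝ) < G := by rw [hG]; positivity
  have hG1 : (1 : ℝ) ≤ G := by
    have : 1 ≤ G := by omega
    exact_mod_cast this
  set μ : ℝ := 1 / (4 * G) with hμ
  have hμ0 : 0 < μ := by positivity
  have hμ1 : μ < 1 := by rw [hμ, div_lt_one (by positivity)]; linarith
  refine ⟨μ, ⟨hμ0, hμ1⟩, 2 ^ (4 * G) + 1, by positivity, C₁ + 2, by linarith, ?_⟩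
  intro d hd X hX
  have hd0 : (0 : ℝ) < d := by exact_mod_cast hd
  have hd1 : (1 : ℝ) ≤ d := by exact_mod_cast hd
  set Y := X / (d : ℝ) with hY
  have hY1 : 1 ≤ Y := by
    have : (0 : ℝ) < 2 ^ (4 * G) := by positivity
    linarith
  set M := ⌊Y⌋₊ with hM
  have hMY : (M : ℝ) ≤ Y := Nat.floor_le (by linarith)
  have hYM : Y < M + 1 := Nat.lt_floor_add_one Y
  have hMbig : (2 : ℝ) ^ (4 * G) ≤ M := by linarith
  have hM0 : (0 : ℝ) < M := lt_of_lt_of_le (by positivity) hMbig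
  have hM1 : 1 ≤ M := by exact_mod_cast hM0
  set J : ℝ := (M : ℝ) ^ μ with hJ
  have hJG : J ^ (4 * G) = M := by
    rw [hJ, ← Real.rpow_natCast, ← Real.rpow_mul hM0.le, hμ]
    push_cast
    rw [one_div_mul_cancel (by positivity), Real.rpow_one]
  have hJ0 : 0 ≤ J := by positivity
  have hJ2 : 2 ≤ J := by
    rw [← hJG] at hMbig
    exact le_of_pow_le_pow_left₀ (by omega) hJ0 hMbig
  set K := J ^ 4 with hK
  have hK2 : 2 ≤ K := by
    have : (2 : ℝ) ^ 4 ≤ J ^ 4 := by gcongr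
    rw [hK]; linarith
  have hK1 : 1 ≤ K := by linarith
  have hK0 : 0 < K := by linarith
  have hKG : K ^ G = M := by rw [hK, ← pow_mul, hJG]
  have hexp : ∀ h : ℕ, 1 ≤ h → (h : ℝ) ≤ J ^ 4 →
      ‖∑ m ∈ range M, ee (h * (P.eval ((d : ℝ) * m) / d))‖ ≤ M / J ^ 4 := by
    intro h hh1 hhK
    by_contra hcon
    push Not at hcon
    set Q : Polynomial ℝ := Polynomial.C ((h : ℝ) / d) *
      P.comp (Polynomial.C (d : ℝ) * Polynomial.X) with hQ
    have hQc : ∀ i, Q.coeff i = h / d * (P.coeff i * (d : ℝ) ^ i) := by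
      intro i
      rw [hQ, Polynomial.coeff_C_mul, Polynomial.comp_C_mul_X_coeff]
    have hQd : Q.natDegree ≤ P.natDegree + 1 := by
      rw [Polynomial.natDegree_le_iff_coeff_eq_zero]
      intro i hi
      rw [hQc, Polynomial.coeff_eq_zero_of_natDegree_lt (by omega)]
      simp
    have hQe : ∀ m : ℕ, Q.eval (m : ℝ) = h * (P.eval ((d : ℝ) * m) / d) := by
      intro m
      rw [hQ]
      simp only [Polynomial.eval_mul, Polynomial.eval_C, Polynomial.eval_comp, Polynomial.eval_X]
      ring
    obtain ⟨q, hq1, hq2, hq3⟩ := hfull K hK2 M hM1 Q hQd (by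
      simp_rw [hQe]
      exact hcon.le)
    have hnear := (hq3 1 le_rfl (by omega)).nat_mul 2
    obtain ⟨p, hp⟩ := hnear
    have hq0 : (0 : ℝ) < q := by exact_mod_cast hq1
    have hh0 : (0 : ℝ) < h := by exact_mod_cast hh1
    set qq : ℕ := 2 * q * h with hqq
    have hqq1 : 1 < qq := by
      have : 1 ≤ q * h := Nat.mul_pos hq1 hh1
      rw [hqq, mul_assoc]; omega
    have hqq0 : (0 : ℝ) < qq := by exact_mod_cast (by omega : 0 < qq)
    have hqqone : (1 : ℝ) ≤ qq := by exact_mod_cast hqq1.le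
    have hqqK : (qq : ℝ) ≤ K ^ (A + 2) := by
      rw [hqq]
      push_cast
      calc (2 : ℝ) * q * h ≤ K * K ^ A * K := by gcongr
        _ = K ^ (A + 2) := by ring
    have hL := hn p (qq : ℤ) (by exact_mod_cast hqq1)
    rw [zpow_neg, zpow_natCast, Int.cast_natCast] at hL
    have heq : ((2 : ℕ) : ℝ) * (q * Q.coeff 1) - p = qq * (P.coeff 1 - p / qq) := by
      rw [hQc, hqq]
      push_cast
      field_simp
    rw [heq, abs_mul, abs_of_pos hqq0, pow_one] at hp
    have h1 : ((qq : ℝ) ^ n)⁻¹ < K ^ (A + 1) / M := by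
      calc ((qq : ℝ) ^ n)⁻¹ < |P.coeff 1 - p / qq| := hL
        _ ≤ qq * |P.coeff 1 - p / qq| := le_mul_of_one_le_left (abs_nonneg _) hqqone
        _ ≤ _ := hp
        _ = 2 * K ^ A / M := by push_cast; ring
        _ ≤ K * K ^ A / M := by gcongr
        _ = _ := by ring
    rw [inv_lt_iff_one_lt_mul₀ (by positivity), div_mul_eq_mul_div, lt_div_iff₀ hM0] at h1
    have h2 : K ^ (A + 1) * (qq : ℝ) ^ n ≤ M := by
      calc K ^ (A + 1) * (qq : ℝ) ^ n ≤ K ^ (A + 1) * (K ^ (A + 2)) ^ n := by gcongr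
        _ = K ^ G := by rw [hG, pow_add K (A + 1), pow_mul K (A + 2) n]
        _ = M := hKG
    linarith
  have hD := hdisc J hJ2 M (fun m => P.eval ((d : ℝ) * m) / d) hexp (1 / d) (by positivity)
    (by rw [div_le_one hd0]; exact hd1)
  have hAP := AP_card P d hd X
  rw [← hY, ← hM] at hAP
  have hMJ : (M : ℝ) / J ≤ Y ^ (1 - μ) := by
    calc (M : ℝ) / J = (M : ℝ) ^ (1 - μ) := by rw [Real.rpow_sub hM0, Real.rpow_one]
      _ ≤ _ := by gcongr
  have hY2 : 1 ≤ Y ^ (1 - μ) := Real.one_le_rpow hY1 (by linarith)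
  have hXd : X / (d : ℝ) ^ 2 = 1 / d * Y := by rw [hY]; field_simp
  have hlast : |1 / d * (M : ℝ) - X / (d : ℝ) ^ 2| ≤ 1 := by
    rw [hXd, ← mul_sub, abs_mul, abs_of_pos (by positivity), abs_of_nonpos (by linarith)]
    have : 1 / (d : ℝ) ≤ 1 := by rw [div_le_one hd0]; exact hd1
    have h0 : 0 < 1 / (d : ℝ) := by positivity
    nlinarith
  have t1 := abs_sub_le ((AP P d X).card : ℝ) (((range M).filter
      (fun m : ℕ => Int.fract (P.eval ((d : ℝ) * m) / d) < 1 / d)).card : ℝ) (X / (d : ℝ) ^ 2)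
  have t2 := abs_sub_le (((range M).filter
      (fun m : ℕ => Int.fract (P.eval ((d : ℝ) * m) / d) < 1 / d)).card : ℝ) (1 / d * (M : ℝ))
      (X / (d : ℝ) ^ 2)
  have hfin : C₁ * (M / J) ≤ C₁ * Y ^ (1 - μ) := by gcongr
  linarith
end

section
/- For every real A > 0 there is a constant C > 0 such that, with c = 1/(2(A+1)) and z = X^{c/log log X}, for all sufficiently large X the number of positive integers d ≤ X with gcd(d, P_z) = 1 satisfies | #{d ≤ X : gcd(d, P_z) = 1} − X·∏_{p prime, p < z}(1 − 1/p) | ≤ C·X/(log X)^A. -/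
open Real Finset

lemma aux_pow_dvd (p m : ℕ) (hp : 0 < p) : p ^ m ∣ (p * m).factorial := by
  induction m with
  | zero => simp
  | succ m ih =>
    have h1 : (p * m).factorial * (p * (m + 1)) ∣ (p * (m + 1)).factorial := by
      have h2 : p * (m + 1) = (p * (m + 1) - 1) + 1 := by
        have : 0 < p * (m + 1) := by positivity
        omega
      rw [h2, Nat.factorial_succ, ← h2, mul_comm]
      apply mul_dvd_mul_left
      apply Nat.factorial_dvd_factorial
      have : p * (m + 1) = p * m + p := by ring
      omega
    refine dvd_trans ?_ h1
    rw [pow_succ]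
    exact mul_dvd_mul ih (Dvd.intro _ rfl)

lemma aux_prod_dvd (N : ℕ) :
    (∏ p ∈ (Finset.Ioc 0 N).filter Nat.Prime, p ^ (N / p)) ∣ N.factorial := by
  apply Finset.prod_dvd_of_isRelPrime
  · intro p hp q hq hpq
    simp only [Finset.coe_filter, Set.mem_ofPred_eq] at hp hq
    simp only [Function.onFun]
    rw [← Nat.coprime_iff_isRelPrime]
    exact Nat.Coprime.pow _ _ ((Nat.coprime_primes hp.2 hq.2).2 hpq)
  · intro p hp
    simp only [Finset.mem_filter] at hp
    exact (aux_pow_dvd p (N / p) hp.2.pos).trans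
      (Nat.factorial_dvd_factorial (Nat.mul_div_le N p))

/-- Upper bound in Mertens' first theorem. -/
lemma aux_mertens (N : ℕ) (hN : 0 < N) :
    ∑ p ∈ (Finset.Ioc 0 N).filter Nat.Prime, Real.log p / p ≤ Real.log N + Real.log 4 := by
  have h1 := Nat.le_of_dvd (Nat.factorial_pos N) (aux_prod_dvd N)
  have h2 : (∏ p ∈ (Finset.Ioc 0 N).filter Nat.Prime, p ^ (N / p)) ≤ N ^ N :=
    h1.trans (Nat.factorial_le_pow N)
  have hpos : ∀ p ∈ (Finset.Ioc 0 N).filter Nat.Prime, (0 : ℝ) < p := by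
    intro p hp
    simp only [Finset.mem_filter] at hp
    exact_mod_cast hp.2.pos
  have h3 : ∑ p ∈ (Finset.Ioc 0 N).filter Nat.Prime, ((N / p : ℕ) : ℝ) * Real.log p
      ≤ N * Real.log N := by
    have : Real.log (∏ p ∈ (Finset.Ioc 0 N).filter Nat.Prime, (p : ℝ) ^ (N / p))
        ≤ Real.log ((N : ℝ) ^ N) := by
      apply Real.log_le_log
      · exact Finset.prod_pos fun p hp => pow_pos (hpos p hp) _
      · exact_mod_cast h2
    rw [Real.log_pow, Real.log_prod (fun p hp => (pow_pos (hpos p hp) _).ne')] at this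
    simpa only [Real.log_pow] using this
  have h4 := Chebyshev.theta_le_log4_mul_x (x := (N : ℝ)) (by positivity)
  rw [Chebyshev.theta, Nat.floor_natCast] at h4
  have h5 : N * ∑ p ∈ (Finset.Ioc 0 N).filter Nat.Prime, Real.log p / p
      ≤ ∑ p ∈ (Finset.Ioc 0 N).filter Nat.Prime, ((N / p : ℕ) : ℝ) * Real.log p
       + ∑ p ∈ (Finset.Ioc 0 N).filter Nat.Prime, Real.log p := by
    rw [Finset.mul_sum, ← Finset.sum_add_distrib]
    apply Finset.sum_le_sum
    intro p hp
    have h0 := hpos p hp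
    have hl : 0 ≤ Real.log p := Real.log_natCast_nonneg p
    have h6 : (N : ℝ) / p ≤ ((N / p : ℕ) : ℝ) + 1 := by
      rw [← Nat.floor_div_eq_div (K := ℝ)]
      exact (Nat.lt_floor_add_one _).le
    calc (N : ℝ) * (Real.log p / p) = (N / p) * Real.log p := by ring
      _ ≤ (((N / p : ℕ) : ℝ) + 1) * Real.log p := by gcongr
      _ = _ := by ring
  have hN' : (0 : ℝ) < N := by exact_mod_cast hN
  refine le_of_mul_le_mul_left ?_ hN'
  linarith

lemma aux_recip_pow (k : ℕ) :
    ∑ p ∈ (Finset.Ioc 0 (2 ^ 2 ^ k)).filter Nat.Prime, (1 : ℝ) / p ≤ 4 * (k + 1) := by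
  induction k with
  | zero =>
    have : (Finset.Ioc 0 (2 ^ 2 ^ 0)).filter Nat.Prime = {2} := by decide
    rw [this]; norm_num
  | succ k ih =>
    set M := 2 ^ 2 ^ k with hM
    set N := 2 ^ 2 ^ (k + 1) with hN
    have hlM : Real.log M = 2 ^ k * Real.log 2 := by
      rw [hM]; push_cast; rw [Real.log_pow]; push_cast; ring
    have hlN : Real.log N = 2 * 2 ^ k * Real.log 2 := by
      rw [hN]; push_cast; rw [Real.log_pow]; push_cast; ring
    have hl2 : 0 < Real.log 2 := Real.log_pos (by norm_num)
    have hMpos : 0 < M := by positivity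
    have hlMpos : 0 < Real.log M := by rw [hlM]; positivity
    have hl4 : Real.log 4 = 2 * Real.log 2 := by
      rw [show (4 : ℝ) = 2 ^ 2 by norm_num, Real.log_pow]; norm_num
    have h1 := aux_mertens N (by positivity)
    have hk : (1 : ℝ) ≤ 2 ^ k := one_le_pow₀ (by norm_num)
    have h2 : ∑ p ∈ (Finset.Ioc 0 N).filter Nat.Prime, (1 : ℝ) / p ≤
        ∑ p ∈ (Finset.Ioc 0 M).filter Nat.Prime, (1 : ℝ) / p +
        ∑ p ∈ (Finset.Ioc 0 N).filter Nat.Prime, Real.log p / p / Real.log M := by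
      have hsub : (Finset.Ioc 0 N).filter Nat.Prime ⊆
          (Finset.Ioc 0 M).filter Nat.Prime ∪
            ((Finset.Ioc 0 N).filter Nat.Prime).filter (fun p => M < p) := by
        intro p hp
        simp only [Finset.mem_union, Finset.mem_filter, Finset.mem_Ioc] at hp ⊢
        by_cases h : M < p
        · right; exact ⟨hp, h⟩
        · left; exact ⟨⟨hp.1.1, by omega⟩, hp.2⟩
      refine (Finset.sum_le_sum_of_subset_of_nonneg hsub (fun _ _ _ => by positivity)).trans ?_
      rw [Finset.sum_union]
      · gcongr 1
        · refine le_trans (b := ∑ p ∈ ((Finset.Ioc 0 N).filter Nat.Prime).filter (fun p => M < p),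
                Real.log p / p / Real.log M) ?_ ?_
          · apply Finset.sum_le_sum
            intro p hp
            simp only [Finset.mem_filter] at hp
            have hp0 : (0 : ℝ) < p := by exact_mod_cast hp.1.2.pos
            have : Real.log M ≤ Real.log p :=
              Real.log_le_log (by exact_mod_cast hMpos) (by exact_mod_cast hp.2.le)
            rw [le_div_iff₀ hlMpos, div_mul_eq_mul_div, one_mul]
            gcongr
          · apply Finset.sum_le_sum_of_subset_of_nonneg (Finset.filter_subset _ _)
            intro p _ _
            have : 0 ≤ Real.log p := Real.log_natCast_nonneg p
            positivity
      · rw [Finset.disjoint_left]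
        intro p hp hq
        simp only [Finset.mem_filter, Finset.mem_Ioc] at hp hq
        omega
    rw [← Finset.sum_div] at h2
    have h3 : (∑ p ∈ (Finset.Ioc 0 N).filter Nat.Prime, Real.log p / p) / Real.log M ≤ 4 := by
      rw [div_le_iff₀ hlMpos]
      refine h1.trans ?_
      rw [hlM, hlN, hl4]
      nlinarith
    push_cast
    linarith

lemma aux_recip (z : ℝ) (hz : 2 ≤ z) :
    ∑ p ∈ (Finset.Ioc 0 ⌊z⌋₊).filter Nat.Prime, (1 : ℝ) / p
      ≤ 6 * Real.log (Real.log z) + 20 := by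
  have hl2 : 0 < Real.log 2 := Real.log_pos (by norm_num)
  have hl2' := Real.log_two_gt_d9
  have hl2'' := Real.log_two_lt_d9
  have hlz : Real.log 2 ≤ Real.log z := Real.log_le_log (by norm_num) hz
  have hlz0 : 0 < Real.log z := by linarith
  set u := Real.log (Real.log z / Real.log 2) / Real.log 2 with hu
  have hu0 : 0 ≤ u := by
    apply div_nonneg _ hl2.le
    apply Real.log_nonneg
    rw [le_div_iff₀ hl2]; linarith
  set k := ⌈u⌉₊ with hk
  have hk1 : u ≤ k := Nat.le_ceil u
  have hk2 : (k : ℝ) < u + 1 := Nat.ceil_lt_add_one hu0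
  have h1 : Real.log z ≤ 2 ^ k * Real.log 2 := by
    have : Real.log (Real.log z / Real.log 2) ≤ Real.log (2 ^ k) := by
      rw [Real.log_pow]
      rwa [hu, div_le_iff₀ hl2] at hk1
    rw [Real.log_le_log_iff (by positivity) (by positivity), div_le_iff₀ hl2] at this
    exact this
  have h2 : z ≤ ((2 ^ 2 ^ k : ℕ) : ℝ) := by
    rw [← Real.log_le_log_iff (by linarith) (by positivity)]
    push_cast
    rw [Real.log_pow]
    push_cast
    exact h1
  have h3 : ⌊z⌋₊ ≤ 2 ^ 2 ^ k := by
    have := Nat.floor_le_floor h2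
    rwa [Nat.floor_natCast] at this
  have h4 : ∑ p ∈ (Finset.Ioc 0 ⌊z⌋₊).filter Nat.Prime, (1 : ℝ) / p ≤ 4 * (k + 1) := by
    refine le_trans ?_ (aux_recip_pow k)
    apply Finset.sum_le_sum_of_subset_of_nonneg
    · apply Finset.filter_subset_filter
      exact Finset.Ioc_subset_Ioc_right h3
    · intros; positivity
  have h5 : u * Real.log 2 = Real.log (Real.log z) - Real.log (Real.log 2) := by
    rw [hu, div_mul_cancel₀ _ hl2.ne', Real.log_div hlz0.ne' hl2.ne']
  have h6 : -Real.log (Real.log 2) ≤ 0.6 := by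
    have := Real.one_sub_inv_le_log_of_pos hl2
    have h7 : (Real.log 2)⁻¹ ≤ 1.6 := by
      rw [inv_le_comm₀ hl2 (by norm_num)]
      norm_num; linarith
    linarith
  have h7 : 4 * u ≤ 6 * (u * Real.log 2) := by nlinarith
  linarith

lemma aux_ind (S : Finset ℕ) (hS : ∀ p ∈ S, p.Prime) (n : ℕ) :
    (if Nat.gcd n (∏ p ∈ S, p) = 1 then (1 : ℝ) else 0)
      = ∑ T ∈ S.powerset, (-1 : ℝ) ^ T.card * (if (∏ p ∈ T, p) ∣ n then 1 else 0) := by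
  have h1 : (if Nat.gcd n (∏ p ∈ S, p) = 1 then (1 : ℝ) else 0)
      = ∏ p ∈ S, (1 + (-(if p ∣ n then (1 : ℝ) else 0))) := by
    split_ifs with h
    · symm
      apply Finset.prod_eq_one
      intro p hp
      have : ¬ p ∣ n := by
        intro hd
        have h2 := Nat.dvd_gcd hd (Finset.dvd_prod_of_mem (fun p => p) hp)
        rw [h] at h2
        exact (hS p hp).one_lt.ne' (Nat.dvd_one.1 h2)
      simp [this]
    · symm
      have : ¬ ∀ p ∈ S, Nat.Coprime n p := by
        intro h'
        exact h (Nat.Coprime.prod_right h')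
      push Not at this
      obtain ⟨p, hp, hnp⟩ := this
      apply Finset.prod_eq_zero hp
      have : p ∣ n := by
        by_contra hd
        exact hnp ((Nat.Prime.coprime_iff_not_dvd (hS p hp)).2 hd).symm
      simp [this]
  rw [h1, Finset.prod_one_add]
  apply Finset.sum_congr rfl
  intro T hT
  rw [Finset.mem_powerset] at hT
  rw [Finset.prod_neg]
  congr 1
  split_ifs with h
  · apply Finset.prod_eq_one
    intro p hp
    rw [if_pos ((Finset.dvd_prod_of_mem (fun p => p) hp).trans h)]
  · have : ¬ ∀ p ∈ T, p ∣ n := by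
      intro h'
      apply h
      apply Finset.prod_primes_dvd
      · intro p hp; exact (hS p (hT hp)).prime
      · exact h'
    push Not at this
    obtain ⟨p, hp, hnp⟩ := this
    apply Finset.prod_eq_zero hp
    simp [hnp]

lemma aux_legendre (S : Finset ℕ) (hS : ∀ p ∈ S, p.Prime) (N : ℕ) :
    (((Finset.Icc 1 N).filter fun d => Nat.gcd d (∏ p ∈ S, p) = 1).card : ℝ)
      = ∑ T ∈ S.powerset, (-1 : ℝ) ^ T.card * ((N / (∏ p ∈ T, p) : ℕ) : ℝ) := by
  rw [Finset.card_filter]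
  push_cast
  simp_rw [aux_ind S hS]
  rw [Finset.sum_comm]
  apply Finset.sum_congr rfl
  intro T _
  rw [← Finset.mul_sum]
  congr 1
  rw [← Nat.Ioc_filter_dvd_card_eq_div, Finset.card_filter]
  push_cast
  rfl

lemma aux_term (X η : ℝ) (hX : 0 < X) (h0 : 0 ≤ η) (h1 : η ≤ 1) (d : ℕ) (hd : 0 < d) :
    |((⌊X⌋₊ / d : ℕ) : ℝ) - X / d| ≤ (X / d) ^ (1 - η) := by
  have hd' : (0 : ℝ) < d := by exact_mod_cast hd
  have hq : 0 < X / d := by positivity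
  rw [← Nat.floor_div_natCast]
  have hle := Nat.floor_le hq.le
  have hlt := Nat.lt_floor_add_one (X / d)
  rw [abs_sub_comm, abs_of_nonneg (by linarith)]
  by_cases h : 1 ≤ X / d
  · have := Real.one_le_rpow h (by linarith : 0 ≤ 1 - η)
    linarith
  · push Not at h
    have h2 : X / d ≤ (X / d) ^ (1 - η) := by
      conv_lhs => rw [← Real.rpow_one (X / d)]
      exact Real.rpow_le_rpow_of_exponent_ge hq h.le (by linarith)
    have : (0 : ℝ) ≤ (⌊X / d⌋₊ : ℝ) := by positivity
    linarith

lemma aux_main (S : Finset ℕ) (hS : ∀ p ∈ S, p.Prime) (X η : ℝ) (hX : 0 < X)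
    (h0 : 0 ≤ η) (h1 : η ≤ 1) :
    |(((Finset.Icc 1 ⌊X⌋₊).filter fun d => Nat.gcd d (∏ p ∈ S, p) = 1).card : ℝ)
      - X * ∏ p ∈ S, (1 - 1 / (p : ℝ))|
      ≤ X ^ (1 - η) * ∏ p ∈ S, (1 + (p : ℝ) ^ (η - 1)) := by
  have e1 : X * ∏ p ∈ S, (1 - 1 / (p : ℝ))
      = ∑ T ∈ S.powerset, (-1 : ℝ) ^ T.card * (X / ((∏ p ∈ T, p : ℕ) : ℝ)) := by
    simp_rw [sub_eq_add_neg]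
    rw [Finset.prod_one_add, Finset.mul_sum]
    apply Finset.sum_congr rfl
    intro T _
    rw [Finset.prod_neg]
    push_cast
    simp only [one_div, Finset.prod_inv_distrib]
    ring
  have e2 : X ^ (1 - η) * ∏ p ∈ S, (1 + (p : ℝ) ^ (η - 1))
      = ∑ T ∈ S.powerset, (X / ((∏ p ∈ T, p : ℕ) : ℝ)) ^ (1 - η) := by
    rw [Finset.prod_one_add, Finset.mul_sum]
    apply Finset.sum_congr rfl
    intro T _
    rw [Real.div_rpow hX.le (by positivity), Real.finsetProd_rpow _ _ (by intros; positivity),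
      div_eq_mul_inv, ← Real.rpow_neg (by positivity)]
    push_cast
    congr 2
    ring
  rw [aux_legendre S hS, e1, e2, ← Finset.sum_sub_distrib]
  refine (Finset.abs_sum_le_sum_abs _ _).trans ?_
  apply Finset.sum_le_sum
  intro T hT
  rw [Finset.mem_powerset] at hT
  rw [← mul_sub, abs_mul, abs_pow, abs_neg, abs_one, one_pow, one_mul]
  apply aux_term X η hX h0 h1
  exact Finset.prod_pos fun p hp => (hS p (hT hp)).pos

lemma aux_primesLt (z : ℝ) :
    primesLt z ⊆ (Finset.Ioc 0 ⌊z⌋₊).filter Nat.Prime := by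
  intro p hp
  simp only [primesLt, Finset.mem_filter, Finset.mem_range] at hp
  simp only [Finset.mem_filter, Finset.mem_Ioc]
  exact ⟨⟨hp.2.1.pos, Nat.le_floor hp.2.2.le⟩, hp.2.1⟩

lemma aux_prod_bound (K z : ℝ) (hK : 0 < K) (hz : 4 ≤ z) :
    ∏ p ∈ primesLt z, (1 + (p : ℝ) ^ (K / Real.log z - 1))
      ≤ Real.exp (6 * Real.log (Real.log z) + 20 + 2 * K * Real.exp K) := by
  have hlz : 0 < Real.log z := Real.log_pos (by linarith)
  have h1 : ∏ p ∈ primesLt z, (1 + (p : ℝ) ^ (K / Real.log z - 1))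
      ≤ Real.exp (∑ p ∈ primesLt z, (p : ℝ) ^ (K / Real.log z - 1)) := by
    rw [Real.exp_sum]
    apply Finset.prod_le_prod
    · intros; positivity
    · intro p _
      rw [add_comm]
      exact Real.add_one_le_exp _
  refine h1.trans (Real.exp_le_exp.2 ?_)
  have h2 : ∀ p ∈ primesLt z, (p : ℝ) ^ (K / Real.log z - 1)
      ≤ 1 / p + K * Real.exp K / Real.log z * (Real.log p / p) := by
    intro p hp
    simp only [primesLt, Finset.mem_filter, Finset.mem_range] at hp
    have hp0 : (0 : ℝ) < p := by exact_mod_cast hp.2.1.pos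
    have hlp : 0 ≤ Real.log p := Real.log_natCast_nonneg p
    have hlpz : Real.log p ≤ Real.log z := Real.log_le_log hp0 hp.2.2.le
    rw [Real.rpow_sub hp0, Real.rpow_one, Real.rpow_def_of_pos hp0]
    set t := Real.log p * (K / Real.log z) with ht
    have ht0 : 0 ≤ t := by positivity
    have htK : t ≤ K := by
      rw [ht, mul_div_assoc', div_le_iff₀ hlz, mul_comm]
      gcongr
    have h3 : Real.exp t ≤ 1 + t * Real.exp K := by
      have h4 : 1 - t ≤ Real.exp (-t) := Real.one_sub_le_exp_neg t
      have h5 : Real.exp t * Real.exp (-t) = 1 := by rw [← Real.exp_add]; simp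
      have h6 : Real.exp t ≤ Real.exp K := Real.exp_le_exp.2 htK
      nlinarith [Real.exp_pos t]
    calc Real.exp t / p ≤ (1 + t * Real.exp K) / p := by gcongr
      _ = _ := by rw [ht]; ring
  refine (Finset.sum_le_sum h2).trans ?_
  rw [Finset.sum_add_distrib, ← Finset.mul_sum]
  have h3 : ∑ p ∈ primesLt z, (1 : ℝ) / p ≤ 6 * Real.log (Real.log z) + 20 :=
    (Finset.sum_le_sum_of_subset_of_nonneg (aux_primesLt z) (by intros; positivity)).trans
      (aux_recip z (by linarith))
  have h4 : ∑ p ∈ primesLt z, Real.log p / p ≤ 2 * Real.log z := by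
    refine (Finset.sum_le_sum_of_subset_of_nonneg (aux_primesLt z) ?_).trans ?_
    · intro p _ _
      have : 0 ≤ Real.log p := Real.log_natCast_nonneg p
      positivity
    · have hf : 0 < ⌊z⌋₊ := Nat.floor_pos.2 (by linarith)
      refine (aux_mertens _ hf).trans ?_
      have h5 : Real.log ⌊z⌋₊ ≤ Real.log z :=
        Real.log_le_log (by exact_mod_cast hf) (Nat.floor_le (by linarith))
      have h6 : Real.log 4 ≤ Real.log z := Real.log_le_log (by norm_num) hz
      linarith
  have h5 : K * Real.exp K / Real.log z * ∑ p ∈ primesLt z, Real.log p / p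
      ≤ K * Real.exp K / Real.log z * (2 * Real.log z) := by gcongr
  have h6 : K * Real.exp K / Real.log z * (2 * Real.log z) = 2 * K * Real.exp K := by
    field_simp
  linarith

/-- With `c = 1/(2(A+1))` and `z = X^(c/log log X)`: for all sufficiently large `X`,
`|#{d ≤ X : gcd(d, P_z) = 1} - X·∏_{p < z}(1 - 1/p)| ≤ C·X/(log X)^A`. -/
theorem statement6 (A : ℝ) (hA : 0 < A) :
    ∃ C > (0 : ℝ), ∃ X₀ : ℝ, ∀ X : ℝ, X ≥ X₀ →
      |((((Finset.Icc 1 ⌊X⌋₊).filter fun d => Nat.gcd d (Pz (zf A X)) = 1).card : ℝ))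
          - X * ∏ p ∈ primesLt (zf A X), (1 - 1 / (p : ℝ))|
        ≤ C * X / (Real.log X) ^ A := by
  refine ⟨Real.exp (20 + 2 * 6 * Real.exp 6), Real.exp_pos _, ?_⟩
  have hc : 0 < 1 / (2 * (A + 1)) := by positivity
  have hT1 : Filter.Tendsto (fun X : ℝ => Real.log (Real.log X)) Filter.atTop Filter.atTop :=
    Real.tendsto_log_atTop.comp Real.tendsto_log_atTop
  have hE : ∀ᶠ X : ℝ in Filter.atTop,
      Real.log (Real.log X) ≤ (1 / (2 * (A + 1)) / 6) * Real.log X := by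
    have := (Real.isLittleO_log_id_atTop.comp_tendsto Real.tendsto_log_atTop).bound
      (show 0 < 1 / (2 * (A + 1)) / 6 by positivity)
    filter_upwards [this, Real.tendsto_log_atTop.eventually_ge_atTop 0] with X h h0
    simp only [Function.comp, id, Real.norm_eq_abs, abs_of_nonneg h0] at h
    exact (le_abs_self _).trans h
  have hall := hE.and ((hT1.eventually_ge_atTop 1).and (Filter.eventually_ge_atTop (3 : ℝ)))
  obtain ⟨X₀, hX₀⟩ := Filter.eventually_atTop.1 hall
  refine ⟨X₀, fun X hX => ?_⟩
  obtain ⟨h1, h2, h3⟩ := hX₀ X hX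
  have hX0 : 0 < X := by linarith
  have hlX : 0 < Real.log X := Real.log_pos (by linarith)
  set L := Real.log (Real.log X) with hL
  have hL0 : 0 < L := by linarith
  have hlz : Real.log (zf A X) = 1 / (2 * (A + 1)) / L * Real.log X := by
    rw [zf, Real.log_rpow hX0]
  have hz0 : 0 < zf A X := Real.rpow_pos_of_pos hX0 _
  have hlz6 : 6 ≤ Real.log (zf A X) := by
    rw [hlz, div_mul_eq_mul_div, le_div_iff₀ hL0]
    linarith
  have hzX : Real.log (zf A X) ≤ Real.log X := by
    rw [hlz]
    have : 1 / (2 * (A + 1)) / L ≤ 1 := by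
      rw [div_le_one hL0]
      refine le_trans ?_ h2
      rw [div_le_one (by positivity)]
      linarith
    nlinarith
  have hz4 : 4 ≤ zf A X := by
    have := Real.log_le_sub_one_of_pos hz0
    linarith
  have hS : ∀ p ∈ primesLt (zf A X), p.Prime := by
    intro p hp
    simp only [primesLt, Finset.mem_filter] at hp
    exact hp.2.1
  have hm := aux_main (primesLt (zf A X)) hS X (6 / Real.log (zf A X)) hX0
    (by positivity) (by rw [div_le_one (by linarith)]; exact hlz6)
  refine hm.trans ?_
  have hp := aux_prod_bound 6 (zf A X) (by norm_num) hz4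
  have hll : Real.log (Real.log (zf A X)) ≤ L := Real.log_le_log (by linarith) hzX
  have e1 : X ^ (1 - 6 / Real.log (zf A X)) = X * Real.exp (-(12 * (A + 1) * L)) := by
    rw [Real.rpow_sub hX0, Real.rpow_one, Real.rpow_def_of_pos hX0, Real.exp_neg, div_eq_mul_inv,
      hlz]
    congr 3
    field_simp
    ring
  have e2 : (Real.log X) ^ A = Real.exp (L * A) := by
    rw [Real.rpow_def_of_pos hlX]
  calc X ^ (1 - 6 / Real.log (zf A X)) *
        ∏ p ∈ primesLt (zf A X), (1 + (p : ℝ) ^ (6 / Real.log (zf A X) - 1))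
      ≤ X ^ (1 - 6 / Real.log (zf A X)) *
        Real.exp (6 * Real.log (Real.log (zf A X)) + 20 + 2 * 6 * Real.exp 6) := by gcongr
    _ = X * Real.exp (-(12 * (A + 1) * L) +
        (6 * Real.log (Real.log (zf A X)) + 20 + 2 * 6 * Real.exp 6)) := by
      rw [e1, Real.exp_add (-(12 * (A + 1) * L))]; ring
    _ ≤ X * Real.exp ((20 + 2 * 6 * Real.exp 6) - L * A) := by
      gcongr
      nlinarith [mul_pos hA hL0]
    _ = _ := by
      rw [e2, Real.exp_sub]; ring
end

section
/- For all sufficiently large real X, the number of natural numbers n with 3 ≤ n ≤ X satisfying |ω(n) − log log n| > (log log n)^{2/3} is at most X/(log log X)^{1/3}. -/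
open Real Finset

/-- `α` is Liouville: for every `n ∈ ℕ` there are integers `p, q` with `q > 1`
and `|α - p/q| ≤ q^(-n)`. -/
def IsLiouvilleNum (α : ℝ) : Prop :=
  ∀ n : ℕ, ∃ p q : ℤ, 1 < q ∧ |α - (p : ℝ) / (q : ℝ)| ≤ (q : ℝ) ^ (-(n : ℤ))

noncomputable def fz (z s : ℝ) (m : ℕ) : ℝ := z ^ m.primeFactors.card / (m : ℝ) ^ s

lemma fz_mul (z s : ℝ) {m n : ℕ} (h : Nat.Coprime m n) :
    fz z s (m * n) = fz z s m * fz z s n := by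
  unfold fz
  rw [h.primeFactors_mul, Finset.card_union_of_disjoint h.disjoint_primeFactors, pow_add,
    Nat.cast_mul, Real.mul_rpow (by positivity) (by positivity), mul_div_mul_comm]

lemma fz_one (z s : ℝ) : fz z s 1 = 1 := by simp [fz]

lemma fz_pp (z s : ℝ) {p : ℕ} (hp : p.Prime) (k : ℕ) :
    fz z s (p ^ (k + 1)) = z * ((p : ℝ) ^ (-s)) * ((p : ℝ) ^ (-s)) ^ k := by
  unfold fz
  rw [Nat.primeFactors_prime_pow (by omega) hp]
  have hp0 : (0 : ℝ) < p := by exact_mod_cast hp.pos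
  rw [mul_assoc, ← pow_succ', ← Real.rpow_natCast ((p : ℝ) ^ (-s)), ← Real.rpow_mul hp0.le]
  rw [Nat.cast_pow, ← Real.rpow_natCast (p : ℝ), ← Real.rpow_mul hp0.le, div_eq_mul_inv,
    ← Real.rpow_neg hp0.le]
  simp
  left; congr 1; ring

lemma x_bd {s : ℝ} (hs : 1 < s) {p : ℕ} (hp : p.Prime) :
    0 < (p : ℝ) ^ (-s) ∧ (p : ℝ) ^ (-s) ≤ 1 / p ∧ (p : ℝ) ^ (-s) ≤ 1 / 2 := by
  have h2 : (2 : ℝ) ≤ p := by exact_mod_cast hp.two_le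
  have h1 : (p : ℝ) ^ (-s) ≤ 1 / p := by
    rw [one_div, ← Real.rpow_neg_one]
    exact Real.rpow_le_rpow_of_exponent_le (by linarith) (by linarith)
  refine ⟨by positivity, h1, h1.trans ?_⟩
  exact one_div_le_one_div_of_le (by norm_num) h2

lemma fz_hasSum (z : ℝ) {s : ℝ} (hs : 1 < s) {p : ℕ} (hp : p.Prime) :
    HasSum (fun k : ℕ => fz z s (p ^ k)) (1 + z * ((p : ℝ) ^ (-s) / (1 - (p : ℝ) ^ (-s)))) := by
  obtain ⟨h0, -, h2⟩ := x_bd hs hp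
  have := (hasSum_geometric_of_lt_one h0.le (by linarith)).mul_left (z * ((p : ℝ) ^ (-s)))
  simp_rw [← fz_pp z s hp] at this
  rw [hasSum_nat_add_iff (f := fun k : ℕ => fz z s (p ^ k))] at this
  convert! this using 1
  simp [fz_one]
  ring

lemma fz_nonneg {z : ℝ} (hz : 0 < z) (s : ℝ) (m : ℕ) : 0 ≤ fz z s m := by
  unfold fz; positivity

lemma fz_euler {z : ℝ} (hz : 0 < z) {s : ℝ} (hs : 1 < s) (N : ℕ) :
    HasSum (fun m : N.smoothNumbers ↦ fz z s m)
      (∏ p ∈ N.primesBelow, (1 + z * ((p : ℝ) ^ (-s) / (1 - (p : ℝ) ^ (-s))))) := by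
  have := (EulerProduct.summable_and_hasSum_smoothNumbers_prod_primesBelow_tsum (fz_one z s)
    (fun h => fz_mul z s h) (fun {p} hp => by
      have := (fz_hasSum z hs hp).summable
      simpa [abs_of_nonneg (fz_nonneg hz s _)] using this) N).2
  convert! this using 1
  refine Finset.prod_congr rfl fun p hp => ?_
  exact (fz_hasSum z hs (Nat.prime_of_mem_primesBelow hp)).tsum_eq.symm

lemma sum_le_prod {z : ℝ} (hz : 0 < z) {s : ℝ} (hs : 1 < s) (N : ℕ) :
    ∑ m ∈ Ioc 0 N, fz z s m ≤
      ∏ p ∈ (N + 1).primesBelow, (1 + z * ((p : ℝ) ^ (-s) / (1 - (p : ℝ) ^ (-s)))) := by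
  have h := (hasSum_subtype_iff_indicator (f := fz z s)).1 (fz_euler hz hs (N + 1))
  have h2 := sum_le_hasSum (Ioc 0 N) (fun i _ => Set.indicator_nonneg (fun m _ => fz_nonneg hz s m) i) h
  refine le_trans (le_of_eq ?_) h2
  refine Finset.sum_congr rfl fun m hm => ?_
  rw [Set.indicator_of_mem]
  rw [Finset.mem_Ioc] at hm
  exact Nat.mem_smoothNumbers_of_lt hm.1 (by omega)

lemma prod_le_zeta {s : ℝ} (hs : 1 < s) (N : ℕ) :
    ∏ p ∈ N.primesBelow, (1 + ((p : ℝ) ^ (-s) / (1 - (p : ℝ) ^ (-s)))) ≤ 1 + 1 / (s - 1) := by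
  have h := fz_euler one_pos hs N
  simp only [one_mul] at h
  have h1 := ZetaAsymptotics.zeta_limit_aux1 hs
  have h2 : 0 ≤ ZetaAsymptotics.termTSum s := tsum_nonneg fun n => ZetaAsymptotics.term_nonneg _ _
  have h3 : Summable (fun n : ℕ => fz 1 s n) := by
    simpa [fz] using (Real.summable_one_div_nat_rpow.2 hs)
  have h4 : ∑' n : ℕ, fz 1 s n = ∑' n : ℕ, 1 / (n + 1 : ℝ) ^ s := by
    rw [h3.tsum_eq_zero_add]
    simp [fz, Real.zero_rpow (by linarith : s ≠ 0)]
  have h5 : ∑' m : N.smoothNumbers, fz 1 s m ≤ ∑' n : ℕ, fz 1 s n :=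
    h3.tsum_subtype_le _ (N.smoothNumbers) (fun n => fz_nonneg one_pos s n)
  rw [h.tsum_eq] at h5
  nlinarith

lemma local_bd {z x : ℝ} (hz : 0 < z) (hx : 0 < x) (hx2 : x ≤ 1 / 2) :
    1 + z * (x / (1 - x)) ≤ (1 + x / (1 - x)) ^ z * Real.exp (2 * z * x ^ 2) := by
  have h1 : 0 < 1 - x := by linarith
  have e1 : 1 + x / (1 - x) = (1 - x)⁻¹ := by field_simp; ring
  have e2 : x / (1 - x) ≤ x + 2 * x ^ 2 := by
    rw [div_le_iff₀ h1]; nlinarith [mul_pos hx hx]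
  have e3 : Real.exp x ≤ (1 - x)⁻¹ := by
    rw [le_inv_comm₀ (by positivity) h1, ← Real.exp_neg]
    exact Real.one_sub_le_exp_neg x
  calc 1 + z * (x / (1 - x)) ≤ Real.exp (z * (x / (1 - x))) := by
        linarith [Real.add_one_le_exp (z * (x / (1 - x)))]
    _ ≤ Real.exp (z * (x + 2 * x ^ 2)) := by gcongr
    _ = Real.exp x ^ z * Real.exp (2 * z * x ^ 2) := by
        rw [← Real.exp_mul, ← Real.exp_add]; ring_nf
    _ ≤ _ := by rw [e1]; gcongr

lemma sum_sq_bd (N : ℕ) {s : ℝ} (hs : 1 < s) :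
    ∑ p ∈ N.primesBelow, ((p : ℝ) ^ (-s)) ^ 2 ≤ 2 := by
  calc ∑ p ∈ N.primesBelow, ((p : ℝ) ^ (-s)) ^ 2 ≤ ∑ p ∈ N.primesBelow, ((p : ℝ) ^ 2)⁻¹ := by
        refine Finset.sum_le_sum fun p hp => ?_
        obtain ⟨h0, h1, -⟩ := x_bd hs (Nat.prime_of_mem_primesBelow hp)
        rw [← inv_pow, ← one_div]
        gcongr
    _ ≤ ∑ p ∈ Ioo 0 N, ((p : ℝ) ^ 2)⁻¹ := by
        refine Finset.sum_le_sum_of_subset_of_nonneg (fun p hp => ?_) (fun _ _ _ => by positivity)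
        exact Finset.mem_Ioo.2 ⟨(Nat.prime_of_mem_primesBelow hp).pos, Nat.lt_of_mem_primesBelow hp⟩
    _ ≤ _ := by simpa using sum_Ioo_inv_sq_le (α := ℝ) 0 N

lemma prod_bd {z : ℝ} (hz : 0 < z) (hz2 : z ≤ 2) {s : ℝ} (hs : 1 < s) (N : ℕ) :
    ∏ p ∈ N.primesBelow, (1 + z * ((p : ℝ) ^ (-s) / (1 - (p : ℝ) ^ (-s)))) ≤
      (1 + 1 / (s - 1)) ^ z * Real.exp 8 := by
  have hpos : ∀ p ∈ N.primesBelow, 0 ≤ (p : ℝ) ^ (-s) / (1 - (p : ℝ) ^ (-s)) := fun p hp => by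
    obtain ⟨h0, h1, h2⟩ := x_bd hs (Nat.prime_of_mem_primesBelow hp)
    exact div_nonneg h0.le (by linarith)
  calc _ ≤ ∏ p ∈ N.primesBelow, ((1 + (p : ℝ) ^ (-s) / (1 - (p : ℝ) ^ (-s))) ^ z
            * Real.exp (2 * z * ((p : ℝ) ^ (-s)) ^ 2)) := by
        refine Finset.prod_le_prod (fun p hp => ?_) (fun p hp => ?_)
        · have := hpos p hp
          positivity
        · obtain ⟨h0, h1, h2⟩ := x_bd hs (Nat.prime_of_mem_primesBelow hp)
          exact local_bd hz h0 h2
    _ = (∏ p ∈ N.primesBelow, (1 + (p : ℝ) ^ (-s) / (1 - (p : ℝ) ^ (-s)))) ^ z *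
          Real.exp (2 * z * ∑ p ∈ N.primesBelow, ((p : ℝ) ^ (-s)) ^ 2) := by
        rw [Finset.prod_mul_distrib, Real.finsetProd_rpow _ _ (fun p hp => by linarith [hpos p hp]),
          Finset.mul_sum, Real.exp_sum]
    _ ≤ _ := by
        have h1 := sum_sq_bd N hs
        have h2 : 0 ≤ ∑ p ∈ N.primesBelow, ((p : ℝ) ^ (-s)) ^ 2 := by positivity
        gcongr
        · exact Finset.prod_nonneg fun p hp => by linarith [hpos p hp]
        · exact prod_le_zeta hs N
        · nlinarith

lemma sum_div_bd {z : ℝ} (hz : 0 < z) (hz2 : z ≤ 2) {N : ℕ} (hN : 3 ≤ N) :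
    ∑ m ∈ Ioc 0 N, z ^ m.primeFactors.card / (m : ℝ) ≤ 4 * Real.exp 9 * (Real.log N) ^ z := by
  have hN' : (3 : ℝ) ≤ N := by exact_mod_cast hN
  have hlog : 1 ≤ Real.log N := by
    rw [Real.le_log_iff_exp_le (by linarith)]
    linarith [Real.exp_one_lt_d9]
  have hs : 1 < 1 + 1 / Real.log N := by
    have : 0 < 1 / Real.log N := by positivity
    linarith
  have h := (sum_le_prod hz hs N).trans (prod_bd hz hz2 hs (N + 1))
  have h1 : ∑ m ∈ Ioc 0 N, z ^ m.primeFactors.card / (m : ℝ) ≤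
      Real.exp 1 * ∑ m ∈ Ioc 0 N, fz z (1 + 1 / Real.log N) m := by
    rw [Finset.mul_sum]
    refine Finset.sum_le_sum fun m hm => ?_
    rw [Finset.mem_Ioc] at hm
    have hm0 : (0 : ℝ) < m := by exact_mod_cast hm.1
    have hmN : (m : ℝ) ≤ N := by exact_mod_cast hm.2
    unfold fz
    rw [Real.rpow_add hm0, Real.rpow_one]
    have : (m : ℝ) ^ (1 / Real.log N) ≤ Real.exp 1 := by
      rw [Real.rpow_def_of_pos hm0]
      gcongr
      rw [mul_one_div, div_le_one (by linarith)]
      gcongr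
    rw [mul_div_assoc', div_le_div_iff₀ (by positivity) (by positivity)]
    have h0 : 0 ≤ z ^ m.primeFactors.card * m := by positivity
    nlinarith [mul_le_mul_of_nonneg_left this h0]
  have h2 : (1 + 1 / (1 + 1 / Real.log N - 1)) ^ z ≤ 4 * (Real.log N) ^ z := by
    have : 1 + 1 / (1 + 1 / Real.log N - 1) ≤ 2 * Real.log N := by
      rw [add_sub_cancel_left, one_div_one_div]; linarith
    have h0 : 0 ≤ 1 + 1 / (1 + 1 / Real.log N - 1) := by
      rw [add_sub_cancel_left, one_div_one_div]; linarith
    calc _ ≤ (2 * Real.log N) ^ z := by gcongr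
      _ = 2 ^ z * (Real.log N) ^ z := Real.mul_rpow (by norm_num) (by linarith)
      _ ≤ _ := by
        gcongr
        calc (2 : ℝ) ^ z ≤ 2 ^ (2 : ℝ) := Real.rpow_le_rpow_of_exponent_le (by norm_num) hz2
          _ = 4 := by norm_num
  calc _ ≤ _ := h1
    _ ≤ Real.exp 1 * (4 * (Real.log N) ^ z * Real.exp 8) := by
      gcongr
      exact h.trans (by gcongr)
    _ = _ := by
      rw [show (9 : ℝ) = 1 + 8 by norm_num, Real.exp_add]; ring

noncomputable def fa (z : ℝ) : ArithmeticFunction ℝ :=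
  ⟨fun n => if n = 0 then 0 else z ^ n.primeFactors.card, by simp⟩

lemma fa_apply (z : ℝ) {n : ℕ} (hn : n ≠ 0) : fa z n = z ^ n.primeFactors.card := by
  simp [fa, hn]

lemma pow_compare {z : ℝ} (hz : 0 < z) (hz2 : z ≤ 2) {a b : ℕ} (h1 : a ≤ b) (h2 : b ≤ a + 1) :
    z ^ b ≤ 2 * z ^ a := by
  have h0 : 0 < z ^ a := by positivity
  obtain rfl | rfl : b = a ∨ b = a + 1 := by omega
  · linarith
  · rw [pow_succ]; nlinarith

lemma card_compare {a d : ℕ} (ha : a ≠ 0) (hd : IsPrimePow d) :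
    a.primeFactors.card ≤ (a * d).primeFactors.card ∧
    (a * d).primeFactors.card ≤ a.primeFactors.card + 1 := by
  rw [Nat.primeFactors_mul ha hd.ne_zero]
  refine ⟨Finset.card_le_card Finset.subset_union_left, (Finset.card_union_le _ _).trans ?_⟩
  obtain ⟨p, k, hp, hk, rfl⟩ := hd
  rw [Nat.primeFactors_prime_pow hk.ne' hp.nat_prime]
  simp

open ArithmeticFunction in
lemma fa_log {z : ℝ} (hz : 0 < z) (hz2 : z ≤ 2) {n : ℕ} (hn : n ≠ 0) :
    z ^ n.primeFactors.card * Real.log n ≤ 2 * (fa z * vonMangoldt) n := by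
  rw [← vonMangoldt_sum, ArithmeticFunction.mul_apply, Finset.mul_sum, Finset.mul_sum,
    ← Nat.sum_divisorsAntidiagonal' (fun _ b => z ^ n.primeFactors.card * vonMangoldt b)]
  refine Finset.sum_le_sum fun x hx => ?_
  obtain ⟨h1, -⟩ := Nat.mem_divisorsAntidiagonal.1 hx
  have ha : x.1 ≠ 0 := by rintro h; simp [h] at h1; exact hn h1.symm
  rw [fa_apply z ha]
  by_cases hd : IsPrimePow x.2
  · have hc := card_compare ha hd
    rw [h1] at hc
    have := pow_compare hz hz2 hc.1 hc.2
    nlinarith [vonMangoldt_nonneg (n := x.2)]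
  · simp [vonMangoldt_eq_zero_iff.2 hd]

open ArithmeticFunction in
lemma sum_log_bd {z : ℝ} (hz : 0 < z) (hz2 : z ≤ 2) {N : ℕ} (hN : 3 ≤ N) :
    ∑ n ∈ Ioc 0 N, z ^ n.primeFactors.card * Real.log n ≤
      2 * (Real.log 4 + 4) * (4 * Real.exp 9) * N * (Real.log N) ^ z := by
  calc _ ≤ ∑ n ∈ Ioc 0 N, 2 * (fa z * vonMangoldt) n := by
        refine Finset.sum_le_sum fun n hn => fa_log hz hz2 ?_
        have := (Finset.mem_Ioc.1 hn).1
        omega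
    _ = 2 * ∑ n ∈ Ioc 0 N, fa z n * ∑ m ∈ Ioc 0 (N / n), vonMangoldt m := by
        rw [← Finset.mul_sum, sum_Ioc_mul_eq_sum_sum]
    _ ≤ 2 * ∑ n ∈ Ioc 0 N, (Real.log 4 + 4) * N * (z ^ n.primeFactors.card / (n : ℝ)) := by
        refine mul_le_mul_of_nonneg_left (Finset.sum_le_sum fun n hn => ?_) (by norm_num)
        have hn0 : n ≠ 0 := by have := (Finset.mem_Ioc.1 hn).1; omega
        have hn1 : (0 : ℝ) < n := by positivity
        rw [fa_apply z hn0]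
        have h := Chebyshev.psi_le_const_mul_self (x := ((N / n : ℕ) : ℝ)) (by positivity)
        rw [Chebyshev.psi, Nat.floor_natCast] at h
        have h3 : ((N / n : ℕ) : ℝ) ≤ N / n := Nat.cast_div_le
        have h4 : (0:ℝ) < Real.log 4 + 4 := by
          have := Real.log_nonneg (show (1:ℝ) ≤ 4 by norm_num); linarith
        calc _ ≤ z ^ n.primeFactors.card * ((Real.log 4 + 4) * (N / n)) := by
              gcongr
              exact h.trans (by gcongr)
          _ = _ := by ring
    _ = 2 * ((Real.log 4 + 4) * N) * ∑ n ∈ Ioc 0 N, (z ^ n.primeFactors.card / (n : ℝ)) := by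
        rw [← Finset.mul_sum]; ring
    _ ≤ 2 * ((Real.log 4 + 4) * N) * (4 * Real.exp 9 * (Real.log N) ^ z) := by
        have h4 : (0:ℝ) < Real.log 4 + 4 := by
          have := Real.log_nonneg (show (1:ℝ) ≤ 4 by norm_num); linarith
        gcongr
        exact sum_div_bd hz hz2 hN
    _ = _ := by ring

/-- Rankin type counting bound. -/
lemma count_bd : ∃ C : ℝ, 0 < C ∧ ∀ (z : ℝ), 0 < z → z ≤ 2 → ∀ X : ℝ, 3 ≤ X →
    ∀ (A : Finset ℕ) (B : ℝ), (∀ n ∈ A, √X < n ∧ (n : ℝ) ≤ X ∧ B ≤ z ^ n.primeFactors.card) →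
      (A.card : ℝ) * B ≤ C * X * (Real.log X) ^ (z - 1) := by
  have h4 : (0:ℝ) < Real.log 4 + 4 := by
    have := Real.log_nonneg (show (1:ℝ) ≤ 4 by norm_num); linarith
  refine ⟨2 * (2 * (Real.log 4 + 4) * (4 * Real.exp 9)), by positivity, ?_⟩
  intro z hz hz2 X hX A B hA
  have hN : 3 ≤ ⌊X⌋₊ := Nat.le_floor (by exact_mod_cast hX)
  have hNX : (⌊X⌋₊ : ℝ) ≤ X := Nat.floor_le (by linarith)
  have h := sum_log_bd hz hz2 hN
  have hlogX : 0 < Real.log X := Real.log_pos (by linarith)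
  have h1 : (A.card : ℝ) * B * (Real.log X / 2) ≤
      ∑ n ∈ Ioc 0 ⌊X⌋₊, z ^ n.primeFactors.card * Real.log n := by
    calc (A.card : ℝ) * B * (Real.log X / 2) = ∑ n ∈ A, B * (Real.log X / 2) := by
          simp; ring
      _ ≤ ∑ n ∈ A, z ^ n.primeFactors.card * Real.log n := by
          refine Finset.sum_le_sum fun n hn => ?_
          obtain ⟨a, b, c⟩ := hA n hn
          have : Real.log X / 2 ≤ Real.log n := by
            rw [← Real.log_sqrt (by linarith)]
            exact Real.log_le_log (Real.sqrt_pos.2 (by linarith)) a.le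
          gcongr
      _ ≤ _ := by
          refine Finset.sum_le_sum_of_subset_of_nonneg (fun n hn => ?_) (fun n hn _ => ?_)
          · obtain ⟨a, b, c⟩ := hA n hn
            refine Finset.mem_Ioc.2 ⟨?_, Nat.le_floor b⟩
            have : (0:ℝ) < n := lt_of_le_of_lt (Real.sqrt_nonneg _) a
            exact_mod_cast this
          · exact mul_nonneg (by positivity) (Real.log_natCast_nonneg n)
  have h2 : 2 * (Real.log 4 + 4) * (4 * Real.exp 9) * ⌊X⌋₊ * (Real.log ⌊X⌋₊) ^ z ≤
      2 * (Real.log 4 + 4) * (4 * Real.exp 9) * X * (Real.log X) ^ z := by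
    have : (0:ℝ) < ⌊X⌋₊ := by positivity
    have := Real.log_natCast_nonneg ⌊X⌋₊
    gcongr
  have h3 : (Real.log X) ^ z = (Real.log X) ^ (z - 1) * Real.log X := by
    rw [Real.rpow_sub_one hlogX.ne']; field_simp
  rw [h3] at h2
  have h5 := h1.trans (h.trans h2)
  have : ((A.card : ℝ) * B) * (Real.log X / 2) ≤
    (2 * (2 * (Real.log 4 + 4) * (4 * Real.exp 9)) * X * (Real.log X) ^ (z - 1)) * (Real.log X / 2) := by
    calc _ ≤ _ := h5
      _ = _ := by ring
  exact le_of_mul_le_mul_right this (by positivity)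

lemma count_exp {C : ℝ} (hC : 0 < C) (hcount : ∀ (z : ℝ), 0 < z → z ≤ 2 → ∀ X : ℝ, 3 ≤ X →
    ∀ (A : Finset ℕ) (B : ℝ), (∀ n ∈ A, √X < n ∧ (n : ℝ) ≤ X ∧ B ≤ z ^ n.primeFactors.card) →
      (A.card : ℝ) * B ≤ C * X * (Real.log X) ^ (z - 1))
    {z X L t E : ℝ} (hz : 0 < z) (hz2 : z ≤ 2) (hX : 3 ≤ X) (hL : Real.log (Real.log X) = L)
    (A : Finset ℕ) (hA : ∀ n ∈ A, √X < n ∧ (n : ℝ) ≤ X ∧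
      Real.log z * t ≤ Real.log z * n.primeFactors.card)
    (hE : (z - 1) * L - Real.log z * t ≤ E) :
    (A.card : ℝ) ≤ C * X * Real.exp E := by
  have h := hcount z hz hz2 X hX A (Real.exp (Real.log z * t)) (fun n hn => by
    obtain ⟨a, b, c⟩ := hA n hn
    refine ⟨a, b, ?_⟩
    rw [← Real.rpow_natCast, Real.rpow_def_of_pos hz]
    exact Real.exp_le_exp.2 c)
  have hlogX : 0 < Real.log X := Real.log_pos (by linarith)
  rw [Real.rpow_def_of_pos hlogX, hL] at h
  rw [← le_div_iff₀ (by positivity), mul_div_assoc, ← Real.exp_sub] at h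
  refine h.trans ?_
  have : L * (z - 1) - Real.log z * t ≤ E := by linarith
  gcongr

lemma upper_exp {u : ℝ} (hu : 2 ≤ u) :
    ((1 + 1 / (4 * u)) - 1) * u ^ 3 - Real.log (1 + 1 / (4 * u)) * (u ^ 3 + u ^ 2 / 2)
      ≤ 1 - u / 20 := by
  have hu0 : 0 < u := by linarith
  set d := 1 / (4 * u) with hd
  have hd0 : 0 < d := by positivity
  have hdu : d * u = 1 / 4 := by rw [hd]; field_simp
  have h1 : d - d ^ 2 ≤ Real.log (1 + d) := by
    have := Real.one_sub_inv_le_log_of_pos (show 0 < 1 + d by linarith)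
    refine le_trans ?_ this
    have : (1 + d)⁻¹ ≤ 1 - d + d ^ 2 := by
      rw [inv_le_iff_one_le_mul₀ (by linarith)]
      nlinarith [pow_pos hd0 3]
    linarith
  have h2 : (d - d ^ 2) * (u ^ 3 + u ^ 2 / 2) ≤ Real.log (1 + d) * (u ^ 3 + u ^ 2 / 2) := by
    gcongr
  have h3 : (d - d ^ 2) * (u ^ 3 + u ^ 2 / 2) = d * u ^ 3 + u * (d * u) / 2 - (d * u) ^ 2 * u
      - (d * u) ^ 2 / 2 := by ring
  rw [hdu] at h3
  have h4 : (1 + d - 1) * u ^ 3 = d * u ^ 3 := by ring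
  linarith

lemma lower_exp {u : ℝ} (hu : 2 ≤ u) :
    ((1 - 1 / (4 * u)) - 1) * u ^ 3 - Real.log (1 - 1 / (4 * u)) * (u ^ 3 - u ^ 2 / 2)
      ≤ 1 - u / 20 := by
  have hu0 : 0 < u := by linarith
  set d := 1 / (4 * u) with hd
  have hd0 : 0 < d := by positivity
  have hdu : d * u = 1 / 4 := by rw [hd]; field_simp
  have hd1 : d ≤ 1 / 8 := by nlinarith
  have h1 : -(d + 6 / 5 * d ^ 2) ≤ Real.log (1 - d) := by
    have := Real.one_sub_inv_le_log_of_pos (show 0 < 1 - d by linarith)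
    refine le_trans ?_ this
    have : (1 - d)⁻¹ ≤ 1 + d + 6 / 5 * d ^ 2 := by
      rw [inv_le_iff_one_le_mul₀ (by linarith)]
      nlinarith [mul_nonneg (pow_pos hd0 2).le (show 0 ≤ 1 / 8 - d by linarith), pow_pos hd0 2]
    linarith
  have hpos : 0 ≤ u ^ 3 - u ^ 2 / 2 := by nlinarith [pow_pos hu0 2]
  have h2 := mul_le_mul_of_nonneg_right h1 hpos
  have h3 : -(d + 6 / 5 * d ^ 2) * (u ^ 3 - u ^ 2 / 2) = - d * u ^ 3 + u * (d * u) / 2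
     - 6 / 5 * (d * u) ^ 2 * u + 6 / 10 * (d * u) ^ 2 := by ring
  rw [hdu] at h3
  have h4 : (1 - d - 1) * u ^ 3 = - d * u ^ 3 := by ring
  linarith

lemma loglog_bd {X u n : ℝ} (hX : 3 ≤ X) (hu : 2 ≤ u) (hL : Real.log (Real.log X) = u ^ 3)
    (h1 : √X < n) (h2 : n ≤ X) :
    u ^ 3 - 1 ≤ Real.log (Real.log n) ∧ Real.log (Real.log n) ≤ u ^ 3 ∧
    u ^ 2 / 2 + 1 ≤ (Real.log (Real.log n)) ^ ((2 : ℝ) / 3) := by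
  have hu0 : 0 < u := by linarith
  have hlogX : 0 < Real.log X := Real.log_pos (by linarith)
  have hs : 0 < √X := Real.sqrt_pos.2 (by linarith)
  have hl : Real.log X / 2 ≤ Real.log n := by
    rw [← Real.log_sqrt (by linarith)]
    exact Real.log_le_log hs h1.le
  have ha : u ^ 3 - 1 ≤ Real.log (Real.log n) := by
    have := Real.log_le_log (by positivity) hl
    rw [Real.log_div hlogX.ne' (by norm_num), hL] at this
    linarith [Real.log_two_lt_d9]
  have hb : Real.log (Real.log n) ≤ u ^ 3 := by
    rw [← hL]
    exact Real.log_le_log (by linarith) (Real.log_le_log (by linarith) h2)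
  refine ⟨ha, hb, ?_⟩
  have hc : (9 / 10 * u) ^ 3 ≤ Real.log (Real.log n) := by
    refine le_trans ?_ ha
    nlinarith [pow_le_pow_left₀ (by norm_num) hu 3]
  calc u ^ 2 / 2 + 1 ≤ (9 / 10 * u) ^ 2 := by nlinarith
    _ = ((9 / 10 * u) ^ 3) ^ ((2 : ℝ) / 3) := by
      rw [← Real.rpow_natCast _ 3, ← Real.rpow_mul (by positivity), ← Real.rpow_natCast _ 2]
      norm_num
    _ ≤ _ := by gcongr

theorem statement7 :
    ∃ X₀ : ℝ, ∀ X : ℝ, X ≥ X₀ →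
      ((((Finset.Icc 3 ⌊X⌋₊).filter fun n : ℕ =>
          |(n.primeFactors.card : ℝ) - Real.log (Real.log (n : ℝ))| >
            (Real.log (Real.log (n : ℝ))) ^ ((2 : ℝ) / 3)).card : ℝ))
        ≤ X / (Real.log (Real.log X)) ^ ((1 : ℝ) / 3) := by
  obtain ⟨C, hC, hcount⟩ := count_bd
  rw [← Filter.eventually_atTop (p := fun X : ℝ => ((((Finset.Icc 3 ⌊X⌋₊).filter fun n : ℕ =>
          |(n.primeFactors.card : ℝ) - Real.log (Real.log (n : ℝ))| >
            (Real.log (Real.log (n : ℝ))) ^ ((2 : ℝ) / 3)).card : ℝ))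
        ≤ X / (Real.log (Real.log X)) ^ ((1 : ℝ) / 3))]
  have hll : Filter.Tendsto (fun X : ℝ => Real.log (Real.log X)) Filter.atTop Filter.atTop :=
    Real.tendsto_log_atTop.comp Real.tendsto_log_atTop
  have hut : Filter.Tendsto (fun X : ℝ => (Real.log (Real.log X)) ^ ((1 : ℝ) / 3))
      Filter.atTop Filter.atTop := (tendsto_rpow_atTop (by norm_num)).comp hll
  have hlo := (isLittleO_log_rpow_atTop (show (0 : ℝ) < 1 / 2 by norm_num)).bound
    (show (0 : ℝ) < 1 / 2 by norm_num)
  filter_upwards [Filter.eventually_ge_atTop 3, hll.eventually_ge_atTop 0,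
    hut.eventually_ge_atTop 2, hut.eventually_ge_atTop (3200 * (C * Real.exp 1)), hlo]
    with X hX hll0 hu2 huC hlo
  have hL : Real.log (Real.log X) = ((Real.log (Real.log X)) ^ ((1 : ℝ) / 3)) ^ 3 := by
    rw [← Real.rpow_natCast _ 3, ← Real.rpow_mul hll0]; norm_num
  set u := (Real.log (Real.log X)) ^ ((1 : ℝ) / 3) with hu
  have hu0 : 0 < u := by linarith
  have hlogX : 0 < Real.log X := Real.log_pos (by linarith)
  have hX0 : 0 < X := by linarith
  rw [← Real.sqrt_eq_rpow, Real.norm_of_nonneg hlogX.le, Real.norm_of_nonneg (Real.sqrt_nonneg X)]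
    at hlo
  set S := (Finset.Icc 3 ⌊X⌋₊).filter fun n : ℕ =>
          |(n.primeFactors.card : ℝ) - Real.log (Real.log (n : ℝ))| >
            (Real.log (Real.log (n : ℝ))) ^ ((2 : ℝ) / 3) with hS
  let A1 := Finset.Ioc 0 ⌊√X⌋₊
  let A2 := (Finset.Icc 3 ⌊X⌋₊).filter fun n : ℕ => √X < n ∧
    u ^ 3 + u ^ 2 / 2 ≤ (n.primeFactors.card : ℝ)
  let A3 := (Finset.Icc 3 ⌊X⌋₊).filter fun n : ℕ => √X < n ∧
    (n.primeFactors.card : ℝ) ≤ u ^ 3 - u ^ 2 / 2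
  have hsub : S ⊆ A1 ∪ (A2 ∪ A3) := by
    intro n hn
    rw [hS, Finset.mem_filter] at hn
    obtain ⟨hn1, hn2⟩ := hn
    have hn1' := Finset.mem_Icc.1 hn1
    by_cases h : (n : ℝ) ≤ √X
    · refine Finset.mem_union_left _ (Finset.mem_Ioc.2 ⟨by omega, Nat.le_floor h⟩)
    · push Not at h
      refine Finset.mem_union_right _ ?_
      have hnX : (n : ℝ) ≤ X := (Nat.le_floor_iff hX0.le).1 hn1'.2
      obtain ⟨a, b, c⟩ := loglog_bd hX hu2 hL h hnX
      rcases lt_abs.1 hn2 with h' | h'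
      · exact Finset.mem_union_left _ (Finset.mem_filter.2 ⟨hn1, h, by linarith⟩)
      · exact Finset.mem_union_right _ (Finset.mem_filter.2 ⟨hn1, h, by linarith⟩)
  have hd0 : 0 < 1 / (4 * u) := by positivity
  have hd1 : 1 / (4 * u) ≤ 1 / 8 := one_div_le_one_div_of_le (by norm_num) (by linarith)
  have c1 : (A1.card : ℝ) ≤ √X := by
    simp only [A1, Nat.card_Ioc, tsub_zero]
    exact Nat.floor_le (Real.sqrt_nonneg X)
  have c2 : (A2.card : ℝ) ≤ C * X * Real.exp (1 - u / 20) := by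
    refine count_exp hC hcount (z := 1 + 1 / (4 * u)) (by linarith) (by linarith) hX hL A2 ?_
      (upper_exp hu2)
    intro n hn
    obtain ⟨h1, h2, h3⟩ := Finset.mem_filter.1 hn
    refine ⟨h2, (Nat.le_floor_iff hX0.le).1 (Finset.mem_Icc.1 h1).2, ?_⟩
    exact mul_le_mul_of_nonneg_left h3 (Real.log_nonneg (by linarith))
  have c3 : (A3.card : ℝ) ≤ C * X * Real.exp (1 - u / 20) := by
    refine count_exp hC hcount (z := 1 - 1 / (4 * u)) (by linarith) (by linarith) hX hL A3 ?_
      (lower_exp hu2)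
    intro n hn
    obtain ⟨h1, h2, h3⟩ := Finset.mem_filter.1 hn
    refine ⟨h2, (Nat.le_floor_iff hX0.le).1 (Finset.mem_Icc.1 h1).2, ?_⟩
    exact mul_le_mul_of_nonpos_left h3 (Real.log_nonpos (by linarith) (by linarith))
  have hcard : (S.card : ℝ) ≤ A1.card + (A2.card + A3.card) := by
    have := (Finset.card_le_card hsub).trans ((Finset.card_union_le _ _).trans
      (Nat.add_le_add_left (Finset.card_union_le _ _) _))
    exact_mod_cast this
  -- final numerics
  have hsq : √X * √X = X := Real.mul_self_sqrt hX0.le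
  have hull : 2 * u ≤ √X := by
    have h1 : u ≤ u ^ 3 := by nlinarith [pow_pos hu0 2]
    have h2 : Real.log (Real.log X) ≤ Real.log X := Real.log_le_self hlogX.le
    rw [hL] at h2
    -- only gives u ≤ √X / 2
    linarith
  have f1 : √X ≤ X / (2 * u) := by
    rw [le_div_iff₀ (by positivity)]
    nlinarith [Real.sqrt_nonneg X]
  have f2 : C * X * Real.exp (1 - u / 20) ≤ X / (4 * u) := by
    have hq := Real.quadratic_le_exp_of_nonneg (show 0 ≤ u / 20 by positivity)
    have hq2 : u ^ 2 / 800 ≤ Real.exp (u / 20) := by nlinarith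
    rw [Real.exp_sub, ← mul_div_assoc, div_le_div_iff₀ (by positivity) (by positivity)]
    have : C * Real.exp 1 * (4 * u) ≤ Real.exp (u / 20) := by nlinarith
    nlinarith
  calc (S.card : ℝ) ≤ X / (2 * u) + (X / (4 * u) + X / (4 * u)) := by linarith
    _ = X / u := by field_simp; norm_num
end

section
/- Let P ∈ ℝ[x] be a polynomial whose coefficient of x is non-Liouville, and let μ ∈ (0,1), C > 0, C₀ > 0 be constants such that for every positive integer d and every real X with X/d > C one has |#A_d(X) − X/d²| ≤ C₀·(X/d)^{1−μ}. Fix ε ∈ (0,1) and A > 0, set c = 1/(2(A+1)) and z = X^{c/log log X}. Then there is a constant C₁ > 0 such that for all sufficiently large X, the sum of #A_d(X) over all integers d with 1 < d ≤ X/(log z)^ε and gcd(d, P_z) = 1 is at most C₁·X/(log z)^{εμ}. -/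
open Real Finset

/-- `∑_{d ≤ N} d^(μ-1) ≤ N^μ/μ`. -/
lemma sum_rpow_aux (μ : ℝ) (h0 : 0 < μ) (h1 : μ < 1) (N : ℕ) :
    ∑ d ∈ Finset.Icc 1 N, (d : ℝ) ^ (μ - 1) ≤ (N : ℝ) ^ μ / μ := by
  induction N with
  | zero => simp [Real.zero_rpow h0.ne']
  | succ n ih =>
    rw [Finset.sum_Icc_succ_top (by omega)]
    have hn : (0 : ℝ) < ((n + 1 : ℕ) : ℝ) := by positivity
    set m : ℝ := ((n + 1 : ℕ) : ℝ) with hm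
    have hm1 : (1 : ℝ) ≤ m := by rw [hm]; push_cast; linarith [Nat.cast_nonneg (α := ℝ) n]
    have hb := rpow_one_add_le_one_add_mul_self (s := -(1 / m)) (p := μ)
      (by rw [neg_le_neg_iff, div_le_one hn]; exact hm1) h0.le h1.le
    have hnm : (n : ℝ) = m * (1 + -(1 / m)) := by
      field_simp
      rw [hm]; push_cast; ring
    have hpos : (0 : ℝ) ≤ 1 + -(1 / m) := by
      have : 1 / m ≤ 1 := by rw [div_le_one hn]; exact hm1
      linarith
    have hmm : m ^ μ = m ^ (μ - 1) * m := by
      rw [← Real.rpow_add_one hn.ne']; ring_nf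
    have key : (n : ℝ) ^ μ ≤ m ^ μ - μ * m ^ (μ - 1) := by
      rw [hnm, Real.mul_rpow hn.le hpos]
      calc m ^ μ * (1 + -(1 / m)) ^ μ ≤ m ^ μ * (1 + μ * -(1 / m)) :=
            mul_le_mul_of_nonneg_left hb (by positivity)
        _ = m ^ μ - μ * m ^ (μ - 1) := by rw [hmm]; field_simp; ring
    calc _ ≤ (n : ℝ) ^ μ / μ + m ^ (μ - 1) := by linarith
      _ ≤ (m ^ μ - μ * m ^ (μ - 1)) / μ + m ^ (μ - 1) := by gcongr
      _ = m ^ μ / μ := by field_simp; ring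

/-- An integer `d > 1` coprime to `P_z` is at least `z`. -/
lemma le_of_gcd_Pz (z : ℝ) (d : ℕ) (hd : 2 ≤ d) (h : Nat.gcd d (Pz z) = 1) : z ≤ d := by
  by_contra! hlt
  have hp := Nat.minFac_prime (n := d) (by omega)
  have hle : ((d.minFac : ℕ) : ℝ) < z :=
    lt_of_le_of_lt (by exact_mod_cast Nat.minFac_le (by omega)) hlt
  have hmem : d.minFac ∈ primesLt z := by
    unfold primesLt
    rw [Finset.mem_filter, Finset.mem_range]
    exact ⟨Nat.lt_ceil.mpr hle, hp, hle⟩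
  have h2 : d.minFac ∣ Pz z := Finset.dvd_prod_of_mem (fun p => p) hmem
  have h3 := Nat.dvd_gcd (Nat.minFac_dvd d) h2
  rw [h] at h3
  exact hp.one_lt.ne' (Nat.dvd_one.mp h3)

/-- `log z → ∞` as `X → ∞`. -/
lemma tendsto_log_zf (A : ℝ) (hA : 0 < A) :
    Filter.Tendsto (fun X => Real.log (zf A X)) Filter.atTop Filter.atTop := by
  have h1 : Filter.Tendsto (fun t : ℝ => Real.log t / t) Filter.atTop (nhdsWithin 0 (Set.Ioi 0)) := by
    rw [tendsto_nhdsWithin_iff]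
    refine ⟨Real.isLittleO_log_id_atTop.tendsto_div_nhds_zero, ?_⟩
    filter_upwards [Filter.eventually_gt_atTop 1] with t ht
    exact div_pos (Real.log_pos ht) (by linarith)
  have h2 := (h1.inv_tendsto_nhdsGT_zero).comp Real.tendsto_log_atTop
  have hc : 0 < 1 / (2 * (A + 1)) := by positivity
  refine (h2.const_mul_atTop hc).congr' ?_
  filter_upwards [Filter.eventually_gt_atTop 0] with X hX
  unfold zf
  rw [Real.log_rpow hX]
  simp only [Function.comp, Pi.inv_apply, inv_div]
  ring

/-- Assuming the `A_d(X)` error bound with constants `μ ∈ (0,1)`, `C`, `C₀`: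
with `c = 1/(2(A+1))` and `z = X^(c/log log X)`, for all sufficiently large `X`,
`∑_{1 < d ≤ X/(log z)^ε, gcd(d, P_z) = 1} #A_d(X) ≤ C₁·X/(log z)^(εμ)`. -/
theorem statement8 (P : Polynomial ℝ) (hP : ¬ IsLiouvilleReal (P.coeff 1))
    (μ C C₀ : ℝ) (hμ : μ ∈ Set.Ioo (0 : ℝ) 1) (hC : 0 < C) (hC₀ : 0 < C₀)
    (hbound : ∀ d : ℕ, 0 < d → ∀ X : ℝ, X / (d : ℝ) > C →
      |((AP P d X).card : ℝ) - X / (d : ℝ) ^ 2| ≤ C₀ * (X / (d : ℝ)) ^ (1 - μ))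
    (ε A : ℝ) (hε : ε ∈ Set.Ioo (0 : ℝ) 1) (hA : 0 < A) :
    ∃ C₁ > (0 : ℝ), ∃ X₂ : ℝ, ∀ X : ℝ, X ≥ X₂ →
      (∑ d ∈ (Finset.Icc 2 ⌊X / (Real.log (zf A X)) ^ ε⌋₊).filter
          (fun d => Nat.gcd d (Pz (zf A X)) = 1), ((AP P d X).card : ℝ))
        ≤ C₁ * X / (Real.log (zf A X)) ^ (ε * μ) := by
  obtain ⟨hμ0, hμ1⟩ := hμ
  obtain ⟨hε0, hε1⟩ := hε
  refine ⟨2 + C₀ / μ, by positivity, ?_⟩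
  have hT := tendsto_log_zf A hA
  have hev : ∀ᶠ X in Filter.atTop, 1 ≤ Real.log (zf A X) ∧ C < (Real.log (zf A X)) ^ ε ∧ 0 < X :=
    (hT.eventually_ge_atTop 1).and
      ((((tendsto_rpow_atTop hε0).comp hT).eventually_gt_atTop C).and
        (Filter.eventually_gt_atTop 0))
  obtain ⟨X₂, hX₂⟩ := Filter.eventually_atTop.mp hev
  refine ⟨X₂, fun X hX => ?_⟩
  obtain ⟨hL1, hLC, hX0⟩ := hX₂ X hX
  have hz0 : 0 < zf A X := Real.rpow_pos_of_pos hX0 _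
  set z := zf A X with hz
  set L := Real.log z with hL
  have hL0 : 0 < L := by linarith
  have hLz : L + 1 ≤ z := by
    have := Real.log_le_sub_one_of_pos hz0
    linarith
  have hLe : 0 < L ^ ε := Real.rpow_pos_of_pos hL0 _
  have hLm : 0 < L ^ (ε * μ) := Real.rpow_pos_of_pos hL0 _
  set N := ⌊X / L ^ ε⌋₊ with hN
  have hNle : (N : ℝ) ≤ X / L ^ ε := Nat.floor_le (by positivity)
  set F := (Finset.Icc 2 N).filter (fun d => Nat.gcd d (Pz z) = 1) with hF
  have hterm : ∀ d ∈ F, ((AP P d X).card : ℝ) ≤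
      X * ((d : ℝ) ^ 2)⁻¹ + C₀ * X ^ (1 - μ) * (d : ℝ) ^ (μ - 1) := by
    intro d hd
    rw [hF, Finset.mem_filter, Finset.mem_Icc] at hd
    obtain ⟨⟨h2, hdN⟩, -⟩ := hd
    have hd0 : (0 : ℝ) < d := by exact_mod_cast (by omega : 0 < d)
    have hdX : (d : ℝ) ≤ X / L ^ ε := le_trans (by exact_mod_cast hdN) hNle
    have hXd : X / (d : ℝ) > C := by
      refine lt_of_lt_of_le hLC ?_
      rw [le_div_iff₀ hLe] at hdX
      rw [le_div_iff₀ hd0]; linarith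
    have hb := (abs_le.mp (hbound d (by omega) X hXd)).2
    have he : C₀ * (X / (d : ℝ)) ^ (1 - μ) = C₀ * X ^ (1 - μ) * (d : ℝ) ^ (μ - 1) := by
      rw [Real.div_rpow hX0.le hd0.le, show μ - 1 = -(1 - μ) by ring, Real.rpow_neg hd0.le]
      ring
    rw [he] at hb
    have : X / (d : ℝ) ^ 2 = X * ((d : ℝ) ^ 2)⁻¹ := div_eq_mul_inv _ _
    linarith
  have hS1 : ∑ d ∈ F, ((d : ℝ) ^ 2)⁻¹ ≤ 2 / L ^ (ε * μ) := by
    set k := ⌈z⌉₊ - 1 with hk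
    have hc1 : 1 ≤ ⌈z⌉₊ := Nat.ceil_pos.mpr hz0
    have hkz : z ≤ (k : ℝ) + 1 := by
      have : ((k + 1 : ℕ) : ℝ) = (⌈z⌉₊ : ℝ) := by congr 1; omega
      push_cast at this
      rw [this]; exact Nat.le_ceil z
    have hsub : F ⊆ Finset.Ioo k (N + 1) := by
      intro d hd
      rw [hF, Finset.mem_filter, Finset.mem_Icc] at hd
      have h1 := Nat.ceil_le.mpr (le_of_gcd_Pz z d hd.1.1 hd.2)
      rw [Finset.mem_Ioo]; omega
    have hpow : L ^ (ε * μ) ≤ L := by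
      calc L ^ (ε * μ) ≤ L ^ (1 : ℝ) :=
            Real.rpow_le_rpow_of_exponent_le hL1 (by nlinarith)
        _ = L := Real.rpow_one L
    calc _ ≤ ∑ d ∈ Finset.Ioo k (N + 1), ((d : ℝ) ^ 2)⁻¹ :=
          Finset.sum_le_sum_of_subset_of_nonneg hsub (fun _ _ _ => by positivity)
      _ ≤ 2 / ((k : ℝ) + 1) := sum_Ioo_inv_sq_le k (N + 1)
      _ ≤ 2 / L ^ (ε * μ) := by gcongr; linarith
  have hS2 : ∑ d ∈ F, (d : ℝ) ^ (μ - 1) ≤ X ^ μ / L ^ (ε * μ) / μ := by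
    have hsub : F ⊆ Finset.Icc 1 N := by
      intro d hd
      rw [hF, Finset.mem_filter, Finset.mem_Icc] at hd
      rw [Finset.mem_Icc]; omega
    calc _ ≤ ∑ d ∈ Finset.Icc 1 N, (d : ℝ) ^ (μ - 1) :=
          Finset.sum_le_sum_of_subset_of_nonneg hsub (fun _ _ _ => by positivity)
      _ ≤ (N : ℝ) ^ μ / μ := sum_rpow_aux μ hμ0 hμ1 N
      _ ≤ (X / L ^ ε) ^ μ / μ := by gcongr
      _ = _ := by rw [Real.div_rpow hX0.le hLe.le, ← Real.rpow_mul hL0.le]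
  have hXX : X ^ (1 - μ) * X ^ μ = X := by
    rw [← Real.rpow_add hX0]; simp
  calc _ ≤ ∑ d ∈ F, (X * ((d : ℝ) ^ 2)⁻¹ + C₀ * X ^ (1 - μ) * (d : ℝ) ^ (μ - 1)) :=
        Finset.sum_le_sum hterm
    _ = X * ∑ d ∈ F, ((d : ℝ) ^ 2)⁻¹ + C₀ * X ^ (1 - μ) * ∑ d ∈ F, (d : ℝ) ^ (μ - 1) := by
        rw [Finset.sum_add_distrib, Finset.mul_sum, Finset.mul_sum]
    _ ≤ X * (2 / L ^ (ε * μ)) + C₀ * X ^ (1 - μ) * (X ^ μ / L ^ (ε * μ) / μ) := by gcongr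
    _ = 2 * X / L ^ (ε * μ) + C₀ / μ * (X ^ (1 - μ) * X ^ μ) / L ^ (ε * μ) := by ring
    _ = _ := by rw [hXX]; ring
end

section
/- Let P ∈ ℝ[x] be any polynomial. Fix ε ∈ (0,1) and A > 0, set c = 1/(2(A+1)) and z = X^{c/log log X}. Then there is a constant C₁ > 0 such that for all sufficiently large X, the sum of #A_d(X) over all integers d with X/(log z)^ε < d ≤ X and gcd(d, P_z) = 1 is at most X/(log z)^{1−ε} + C₁·X/(log X)^A. -/
open Real Finset

/-- Rough numbers up to `N`. -/
noncomputable def roughs (N : ℕ) (z : ℝ) : Finset ℕ :=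
  (Finset.Icc 1 N).filter fun d => Nat.gcd d (Pz z) = 1

lemma rough_coprime {n m : ℕ} {z : ℝ} (hn : Nat.gcd n (Pz z) = 1) (hm0 : 1 ≤ m)
    (hm : (m : ℝ) < z) : Nat.Coprime n m := by
  refine Nat.Coprime.symm (Nat.coprime_of_dvd ?_)
  intro p hp hpm hpn
  have hle : (p : ℝ) < z := lt_of_le_of_lt (by exact_mod_cast Nat.le_of_dvd hm0 hpm) hm
  have hmem : p ∈ primesLt z := by
    unfold primesLt
    rw [Finset.mem_filter, Finset.mem_range]
    exact ⟨Nat.lt_ceil.2 hle, hp, hle⟩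
  have h1 : p ∣ Pz z := Finset.dvd_prod_of_mem _ hmem
  have h2 : p ∣ 1 := hn ▸ Nat.dvd_gcd hpn h1
  exact hp.one_lt.ne' (Nat.dvd_one.1 h2)

lemma sum_inv_Icc (n : ℕ) : ∑ i ∈ Finset.Icc 1 n, ((i : ℝ))⁻¹ = (harmonic n : ℝ) := by
  simp only [harmonic_eq_sum_Icc, Rat.cast_sum, Rat.cast_inv, Rat.cast_natCast]

lemma rough_recip (N : ℕ) (hN : 1 ≤ N) (z : ℝ) (hz : 2 ≤ z) :
    (∑ n ∈ roughs N z, ((n : ℝ))⁻¹) * Real.log z ≤ 1 + Real.log N + Real.log z := by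
  set K := ⌈z⌉₊ - 1 with hK
  have hc : 2 ≤ ⌈z⌉₊ := by
    have : (2 : ℝ) ≤ ⌈z⌉₊ := hz.trans (Nat.le_ceil z)
    exact_mod_cast this
  have hK1 : K + 1 = ⌈z⌉₊ := by omega
  have hKpos : 1 ≤ K := by omega
  have hKz : (K : ℝ) < z := Nat.lt_ceil.1 (by omega)
  have h1 : Real.log z ≤ ∑ m ∈ Finset.Icc 1 K, ((m : ℝ))⁻¹ := by
    rw [sum_inv_Icc]
    refine le_trans ?_ (log_add_one_le_harmonic K)
    rw [hK1]
    exact Real.log_le_log (by linarith) (Nat.le_ceil z)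
  have h0 : 0 ≤ ∑ n ∈ roughs N z, ((n : ℝ))⁻¹ := Finset.sum_nonneg fun _ _ => by positivity
  have hcop : ∀ n ∈ roughs N z, ∀ m ∈ Finset.Icc 1 K, Nat.Coprime n m := by
    intro n hn m hm
    rw [Finset.mem_Icc] at hm
    refine rough_coprime (Finset.mem_filter.1 hn).2 hm.1 (lt_of_le_of_lt ?_ hKz)
    exact_mod_cast hm.2
  calc (∑ n ∈ roughs N z, ((n : ℝ))⁻¹) * Real.log z
      ≤ (∑ n ∈ roughs N z, ((n : ℝ))⁻¹) * ∑ m ∈ Finset.Icc 1 K, ((m : ℝ))⁻¹ := by gcongr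
    _ = ∑ q ∈ (roughs N z ×ˢ Finset.Icc 1 K : Finset (ℕ × ℕ)), (((q.1 * q.2 : ℕ) : ℝ))⁻¹ := by
        rw [Finset.sum_mul_sum, Finset.sum_product]
        simp [mul_inv, mul_comm]
    _ = ∑ k ∈ (roughs N z ×ˢ Finset.Icc 1 K).image (fun q : ℕ × ℕ => q.1 * q.2), ((k : ℝ))⁻¹ := by
        rw [Finset.sum_image]
        rintro ⟨a, b⟩ h ⟨a', b'⟩ h' hab
        have h := Finset.mem_product.1 h
        have h' := Finset.mem_product.1 h'
        simp only at h h' hab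
        have e1 : a ∣ a' := (hcop a h.1 b' h'.2).dvd_of_dvd_mul_right (hab ▸ Dvd.intro _ rfl)
        have e2 : a' ∣ a := (hcop a' h'.1 b h.2).dvd_of_dvd_mul_right (hab ▸ Dvd.intro _ rfl)
        have e : a = a' := Nat.dvd_antisymm e1 e2
        subst e
        have ha : 0 < a := (Finset.mem_Icc.1 (Finset.mem_filter.1 h.1).1).1
        have := Nat.eq_of_mul_eq_mul_left ha hab
        rw [this]
    _ ≤ ∑ k ∈ Finset.Icc 1 (N * K), ((k : ℝ))⁻¹ := by
        refine Finset.sum_le_sum_of_subset_of_nonneg ?_ (fun _ _ _ => by positivity)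
        intro k hk
        obtain ⟨⟨a, b⟩, h, rfl⟩ := Finset.mem_image.1 hk
        have h := Finset.mem_product.1 h
        have ha := Finset.mem_Icc.1 (Finset.mem_filter.1 h.1).1
        have hb := Finset.mem_Icc.1 h.2
        simp only at ha hb
        exact Finset.mem_Icc.2 ⟨Nat.mul_pos ha.1 hb.1, Nat.mul_le_mul ha.2 hb.2⟩
    _ ≤ 1 + Real.log ((N * K : ℕ) : ℝ) := by
        rw [sum_inv_Icc]; exact harmonic_le_one_add_log _
    _ ≤ 1 + Real.log N + Real.log z := by
        have hNp : (0 : ℝ) < N := by exact_mod_cast hN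
        have hKp : (0 : ℝ) < K := by exact_mod_cast hKpos
        rw [Nat.cast_mul, Real.log_mul hNp.ne' hKp.ne', add_assoc]
        gcongr

open ArithmeticFunction in
lemma rough_log (N : ℕ) (z : ℝ) :
    ∑ n ∈ roughs N z, Real.log n ≤ 6 * N * ∑ n ∈ roughs N z, ((n : ℝ))⁻¹ := by
  have key : ∑ n ∈ roughs N z, Real.log n ≤ ∑ m ∈ roughs N z, Chebyshev.psi ((N : ℝ) / m) := by
    calc ∑ n ∈ roughs N z, Real.log n
        = ∑ n ∈ roughs N z, ∑ q ∈ n.divisorsAntidiagonal, vonMangoldt q.2 := by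
          refine Finset.sum_congr rfl fun n _ => ?_
          rw [← vonMangoldt_sum, Nat.sum_divisorsAntidiagonal' (fun _ b => vonMangoldt b)]
      _ = ∑ s ∈ (roughs N z).sigma (fun n => n.divisorsAntidiagonal), vonMangoldt s.2.2 := by
          rw [Finset.sum_sigma]
      _ = ∑ t ∈ ((roughs N z).sigma (fun n => n.divisorsAntidiagonal)).image (fun s => s.2),
            vonMangoldt t.2 := by
          rw [Finset.sum_image]
          rintro ⟨n, a, b⟩ h ⟨n', a', b'⟩ h' hab
          have h := (Finset.mem_sigma.1 h).2
          have h' := (Finset.mem_sigma.1 h').2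
          rw [Nat.mem_divisorsAntidiagonal] at h h'
          simp only [Prod.mk.injEq] at h h' hab
          obtain ⟨rfl, rfl⟩ := hab
          obtain ⟨rfl, _⟩ := h
          obtain ⟨rfl, _⟩ := h'
          rfl
      _ ≤ ∑ t ∈ (roughs N z).sigma (fun m => Finset.Ioc 0 ⌊(N : ℝ) / m⌋₊), vonMangoldt t.2 := by
          rw [← Finset.sum_image (s := (roughs N z).sigma (fun m => Finset.Ioc 0 ⌊(N : ℝ) / m⌋₊))
            (g := fun t => (t.1, t.2)) (f := fun t : ℕ × ℕ => vonMangoldt t.2)]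
          · refine Finset.sum_le_sum_of_subset_of_nonneg ?_ (fun _ _ _ => vonMangoldt_nonneg)
            intro t ht
            obtain ⟨⟨n, a, b⟩, h, rfl⟩ := Finset.mem_image.1 ht
            have h := Finset.mem_sigma.1 h
            rw [Nat.mem_divisorsAntidiagonal] at h
            simp only at h
            obtain ⟨h1, h2, h3⟩ := h
            have h4 := Finset.mem_filter.1 h1
            have h5 := Finset.mem_Icc.1 h4.1
            have ha : 0 < a := Nat.pos_of_ne_zero (by rintro rfl; simp at h2; omega)
            have hb : 0 < b := Nat.pos_of_ne_zero (by rintro rfl; simp at h2; omega)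
            refine Finset.mem_image.2 ⟨⟨a, b⟩, Finset.mem_sigma.2 ⟨?_, ?_⟩, rfl⟩
            · refine Finset.mem_filter.2 ⟨Finset.mem_Icc.2 ⟨ha, ?_⟩, ?_⟩
              · exact (Nat.le_mul_of_pos_right a hb).trans (h2.trans_le h5.2)
              · exact Nat.Coprime.coprime_dvd_left (Dvd.intro _ h2) h4.2
            · refine Finset.mem_Ioc.2 ⟨hb, ?_⟩
              simp only
              rw [Nat.floor_div_natCast, Nat.floor_natCast, Nat.le_div_iff_mul_le ha, mul_comm]
              exact h2.trans_le h5.2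
          · rintro ⟨a, b⟩ _ ⟨a', b'⟩ _ hab
            simp only [Prod.mk.injEq] at hab
            obtain ⟨rfl, rfl⟩ := hab
            rfl
      _ = _ := by
          rw [Finset.sum_sigma]; rfl
  refine key.trans ?_
  rw [Finset.mul_sum]
  refine Finset.sum_le_sum fun m _ => ?_
  refine (Chebyshev.psi_le_const_mul_self (by positivity)).trans ?_
  have h4 : Real.log 4 ≤ 2 := by
    have : Real.log 4 = 2 * Real.log 2 := by
      rw [show (4 : ℝ) = 2 ^ 2 by norm_num, Real.log_pow]; norm_num
    have := Real.log_two_lt_d9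
    linarith
  rw [mul_assoc, ← div_eq_mul_inv]
  gcongr
  linarith

lemma rough_count (N : ℕ) (z : ℝ) (hz : 3 ≤ z) (hN : z ≤ N) :
    ((roughs N z).card : ℝ) ≤ 21 * N / Real.log z := by
  have hNp : (0 : ℝ) < N := by linarith
  have hN1 : 1 ≤ N := by exact_mod_cast (show (1 : ℝ) ≤ N by linarith)
  have hlz : 1 ≤ Real.log z := by
    rw [Real.le_log_iff_exp_le (by linarith)]
    linarith [Real.exp_one_lt_d9]
  have hlN : Real.log z ≤ Real.log N := Real.log_le_log (by linarith) hN
  have h1 := rough_recip N hN1 z (by linarith)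
  have h2 := rough_log N z
  set H := ∑ n ∈ roughs N z, ((n : ℝ))⁻¹ with hH
  have h3 : ((roughs N z).card : ℝ) * Real.log N ≤ 7 * N * H := by
    have : ((roughs N z).card : ℝ) * Real.log N ≤
        ∑ n ∈ roughs N z, Real.log n + N * H := by
      rw [← nsmul_eq_mul, ← Finset.sum_const, hH, Finset.mul_sum, ← Finset.sum_add_distrib]
      refine Finset.sum_le_sum fun n hn => ?_
      have hn := Finset.mem_Icc.1 (Finset.mem_filter.1 hn).1
      have hnp : (0 : ℝ) < n := by exact_mod_cast hn.1
      have := Real.log_le_sub_one_of_pos (div_pos hNp hnp)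
      rw [Real.log_div hNp.ne' hnp.ne', div_eq_mul_inv] at this
      linarith
    linarith
  rw [le_div_iff₀ (by linarith)]
  have h4 : H * Real.log z ≤ 3 * Real.log N := by linarith
  have h5 : ((roughs N z).card * Real.log z) * Real.log N ≤ (21 * N) * Real.log N := by
    calc ((roughs N z).card * Real.log z) * Real.log N
        = ((roughs N z).card * Real.log N) * Real.log z := by ring
      _ ≤ (7 * N * H) * Real.log z := by gcongr
      _ = 7 * N * (H * Real.log z) := by ring
      _ ≤ 7 * N * (3 * Real.log N) := by gcongr
      _ = _ := by ring
  exact le_of_mul_le_mul_right h5 (by linarith)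

lemma AP_card_s9 (P : Polynomial ℝ) (d : ℕ) (X : ℝ) : (AP P d X).card ≤ ⌊X⌋₊ / d := by
  rw [← Nat.Ioc_filter_dvd_card_eq_div]
  refine Finset.card_le_card fun x hx => ?_
  unfold AP at hx
  rw [Finset.mem_filter, Finset.mem_Icc] at hx
  rw [Finset.mem_filter, Finset.mem_Ioc]
  exact ⟨⟨hx.1.1, hx.1.2⟩, by exact_mod_cast hx.2.1⟩

open Classical in
lemma main_bound (P : Polynomial ℝ) (X z Y : ℝ) (hz : 3 ≤ z) (hY1 : 1 ≤ Y) (hYz : Y ≤ z)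
    (hX : z ^ 3 ≤ X) :
    (∑ d ∈ (Finset.Icc 1 ⌊X⌋₊).filter
          (fun d : ℕ => X / Y < (d : ℝ) ∧ Nat.gcd d (Pz z) = 1),
          ((AP P d X).card : ℝ)) ≤ 21 * X / Real.log z * (1 + Real.log Y) := by
  set N := ⌊X⌋₊ with hN
  set M := ⌊Y⌋₊ with hM
  have hX0 : 0 < X := lt_of_lt_of_le (by positivity) hX
  have hNX : (N : ℝ) ≤ X := Nat.floor_le hX0.le
  have hXN : X < N + 1 := Nat.lt_floor_add_one X
  have hM1 : 1 ≤ M := Nat.one_le_floor_iff Y |>.2 hY1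
  have hlz : 0 < Real.log z := Real.log_pos (by linarith)
  have step : ∑ d ∈ (Finset.Icc 1 N).filter
          (fun d : ℕ => X / Y < (d : ℝ) ∧ Nat.gcd d (Pz z) = 1), (AP P d X).card
      ≤ ∑ m ∈ Finset.Icc 1 M, (roughs (N / m) z).card := by
    set F := (Finset.Icc 1 N).filter
          (fun d : ℕ => X / Y < (d : ℝ) ∧ Nat.gcd d (Pz z) = 1) with hF
    calc ∑ d ∈ F, (AP P d X).card ≤ ∑ d ∈ F, ((Finset.Icc 1 M).filter (fun m => m * d ≤ N)).card := by
          refine Finset.sum_le_sum fun d hd => ?_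
          rw [hF, Finset.mem_filter, Finset.mem_Icc] at hd
          refine (AP_card_s9 P d X).trans ?_
          have : (Finset.Icc 1 (N / d)).card = N / d := by simp
          rw [← hN, ← this]
          refine Finset.card_le_card fun m hm => ?_
          rw [Finset.mem_Icc] at hm
          have hmd : m * d ≤ N := (Nat.le_div_iff_mul_le hd.1.1).1 hm.2
          refine Finset.mem_filter.2 ⟨Finset.mem_Icc.2 ⟨hm.1, Nat.le_floor ?_⟩, hmd⟩
          have h1 : (m : ℝ) * d ≤ X := le_trans (by exact_mod_cast hmd) hNX
          have h2 : X < d * Y := (div_lt_iff₀ (by linarith)).1 hd.2.1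
          have hdp : (0 : ℝ) < d := by exact_mod_cast hd.1.1
          have h3 : (m : ℝ) * d ≤ Y * d := by linarith
          exact le_of_mul_le_mul_right h3 hdp
      _ = ∑ m ∈ Finset.Icc 1 M, (F.filter (fun d => m * d ≤ N)).card := by
          simp only [Finset.card_filter]
          exact Finset.sum_comm
      _ ≤ _ := by
          refine Finset.sum_le_sum fun m hm => Finset.card_le_card fun d hd => ?_
          rw [Finset.mem_Icc] at hm
          rw [Finset.mem_filter, hF, Finset.mem_filter, Finset.mem_Icc] at hd
          refine Finset.mem_filter.2 ⟨Finset.mem_Icc.2 ⟨hd.1.1.1, ?_⟩, hd.1.2.2⟩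
          rw [Nat.le_div_iff_mul_le hm.1, mul_comm]
          exact hd.2
  calc _ ≤ ((∑ m ∈ Finset.Icc 1 M, (roughs (N / m) z).card : ℕ) : ℝ) := by exact_mod_cast step
    _ = ∑ m ∈ Finset.Icc 1 M, ((roughs (N / m) z).card : ℝ) := by push_cast; rfl
    _ ≤ ∑ m ∈ Finset.Icc 1 M, 21 * X / Real.log z * ((m : ℝ))⁻¹ := by
        refine Finset.sum_le_sum fun m hm => ?_
        rw [Finset.mem_Icc] at hm
        have hmp : (0 : ℝ) < m := by exact_mod_cast hm.1
        have hmY : (m : ℝ) ≤ Y := le_trans (by exact_mod_cast hm.2) (Nat.floor_le (by linarith))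
        have hbig : z ≤ ((N / m : ℕ) : ℝ) := by
          have hcl := Nat.ceil_lt_add_one (show 0 ≤ z by linarith)
          refine (Nat.le_ceil z).trans ?_
          rw [Nat.cast_le, Nat.le_div_iff_mul_le hm.1]
          have : ((⌈z⌉₊ * m : ℕ) : ℝ) < ((N + 1 : ℕ) : ℝ) := by
            push_cast
            calc (⌈z⌉₊ : ℝ) * m ≤ (z + 1) * z := by gcongr; linarith
              _ ≤ z ^ 3 := by nlinarith [mul_pos (show 0 < z by linarith) (show 0 < z by linarith)]
              _ ≤ X := hX
              _ < _ := hXN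
          have : ⌈z⌉₊ * m < N + 1 := by exact_mod_cast this
          omega
        refine (rough_count _ z hz hbig).trans ?_
        have : ((N / m : ℕ) : ℝ) ≤ X / m := Nat.cast_div_le.trans (by gcongr)
        calc 21 * ((N / m : ℕ) : ℝ) / Real.log z ≤ 21 * (X / m) / Real.log z := by gcongr
          _ = _ := by field_simp
    _ = 21 * X / Real.log z * (harmonic M : ℝ) := by rw [← Finset.mul_sum, sum_inv_Icc]
    _ ≤ _ := by
        gcongr
        refine (harmonic_le_one_add_log M).trans ?_
        gcongr
        exact Nat.floor_le (by linarith)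

open Filter Topology in
lemma log_zf_tendsto (A : ℝ) (hA : 0 < A) :
    Tendsto (fun X => Real.log (zf A X)) atTop atTop := by
  have h1 : Tendsto (fun y : ℝ => y / Real.log y) atTop atTop := by
    have h := Real.isLittleO_log_id_atTop.tendsto_div_nhds_zero
    have h' : Tendsto (fun y : ℝ => Real.log y / y) atTop (𝓝[>] 0) := by
      rw [tendsto_nhdsWithin_iff]
      refine ⟨h, ?_⟩
      filter_upwards [eventually_gt_atTop 1] with y hy
      exact div_pos (Real.log_pos hy) (by linarith)
    refine (h'.inv_tendsto_nhdsGT_zero).congr fun y => ?_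
    simp
  have h2 : Tendsto (fun X : ℝ => (1 / (2 * (A + 1))) * (Real.log X / Real.log (Real.log X)))
      atTop atTop := (h1.comp Real.tendsto_log_atTop).const_mul_atTop (by positivity)
  refine h2.congr' ?_
  filter_upwards [eventually_gt_atTop 0] with X hX
  unfold zf
  rw [Real.log_rpow hX]
  ring

open Classical in
/-- With `c = 1/(2(A+1))` and `z = X^(c/log log X)`, for all sufficiently large `X`,
`∑_{X/(log z)^ε < d ≤ X, gcd(d, P_z) = 1} #A_d(X) ≤ X/(log z)^(1-ε) + C₁·X/(log X)^A`. -/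
theorem statement9 (P : Polynomial ℝ)
    (ε A : ℝ) (hε : ε ∈ Set.Ioo (0 : ℝ) 1) (hA : 0 < A) :
    ∃ C₁ > (0 : ℝ), ∃ X₂ : ℝ, ∀ X : ℝ, X ≥ X₂ →
      (∑ d ∈ (Finset.Icc 1 ⌊X⌋₊).filter
          (fun d : ℕ => X / (Real.log (zf A X)) ^ ε < (d : ℝ) ∧ Nat.gcd d (Pz (zf A X)) = 1),
          ((AP P d X).card : ℝ))
        ≤ X / (Real.log (zf A X)) ^ (1 - ε) + C₁ * X / (Real.log X) ^ A := by
  obtain ⟨hε0, hε1⟩ := hε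
  refine ⟨1, one_pos, ?_⟩
  have hL := log_zf_tendsto A hA
  -- eventually 21 * (1 + ε log L) ≤ L ^ ε
  have hY : Filter.Tendsto (fun X => Real.log (zf A X) ^ ε) Filter.atTop Filter.atTop :=
    (tendsto_rpow_atTop hε0).comp hL
  have hsmall : ∀ᶠ y : ℝ in Filter.atTop, 21 * (1 + Real.log y) ≤ y := by
    have h := Real.isLittleO_log_id_atTop.bound (show (0 : ℝ) < 1 / 42 by norm_num)
    filter_upwards [h, Filter.eventually_ge_atTop 42] with y hy hy42
    simp only [id, Real.norm_eq_abs] at hy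
    rw [abs_of_nonneg (show (0 : ℝ) ≤ y by linarith)] at hy
    have := le_abs_self (Real.log y)
    linarith
  have hll : Filter.Tendsto (fun X => Real.log (Real.log X)) Filter.atTop Filter.atTop :=
    Real.tendsto_log_atTop.comp Real.tendsto_log_atTop
  have hev : ∀ᶠ X : ℝ in Filter.atTop,
      (∑ d ∈ (Finset.Icc 1 ⌊X⌋₊).filter
          (fun d : ℕ => X / (Real.log (zf A X)) ^ ε < (d : ℝ) ∧ Nat.gcd d (Pz (zf A X)) = 1),
          ((AP P d X).card : ℝ))
        ≤ X / (Real.log (zf A X)) ^ (1 - ε) + 1 * X / (Real.log X) ^ A := by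
    filter_upwards [hY.eventually hsmall, hL.eventually_ge_atTop 3, hll.eventually_ge_atTop 3,
      Filter.eventually_ge_atTop 1] with X h1 h2 h3 hX1
    have hX0 : 0 < X := by linarith
    have hzpos : 0 < zf A X := Real.rpow_pos_of_pos hX0 _
    have hlz : Real.log (zf A X) ≤ zf A X := by
      linarith [Real.log_le_sub_one_of_pos hzpos]
    have hY1 : 1 ≤ Real.log (zf A X) ^ ε := Real.one_le_rpow (by linarith) hε0.le
    have hYL : Real.log (zf A X) ^ ε ≤ Real.log (zf A X) := by
      calc Real.log (zf A X) ^ ε ≤ Real.log (zf A X) ^ (1 : ℝ) :=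
            Real.rpow_le_rpow_of_exponent_le (by linarith) hε1.le
        _ = _ := Real.rpow_one _
    have hz3 : zf A X ^ 3 ≤ X := by
      unfold zf
      rw [← Real.rpow_natCast, ← Real.rpow_mul hX0.le]
      calc _ ≤ X ^ (1 : ℝ) := by
            refine Real.rpow_le_rpow_of_exponent_le hX1 ?_
            rw [div_mul_eq_mul_div, div_le_one (by linarith)]
            have : 1 / (2 * (A + 1)) ≤ 1 := by
              rw [div_le_one (by positivity)]; linarith
            push_cast
            linarith
        _ = X := Real.rpow_one X
    refine (main_bound P X (zf A X) _ (by linarith) hY1 (by linarith) hz3).trans ?_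
    have hlX : 0 ≤ Real.log X := Real.log_nonneg hX1
    have hlast : 0 ≤ 1 * X / (Real.log X) ^ A := by positivity
    have hLp : 0 < Real.log (zf A X) := by linarith
    have hmain : 21 * X / Real.log (zf A X) * (1 + Real.log (Real.log (zf A X) ^ ε))
        ≤ X / (Real.log (zf A X)) ^ (1 - ε) := by
      calc _ = X / Real.log (zf A X) * (21 * (1 + Real.log (Real.log (zf A X) ^ ε))) := by ring
        _ ≤ X / Real.log (zf A X) * (Real.log (zf A X) ^ ε) := by gcongr
        _ = _ := by
            rw [Real.rpow_sub hLp, Real.rpow_one, div_div_eq_mul_div, div_mul_eq_mul_div]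
    linarith
  obtain ⟨X₂, h⟩ := Filter.eventually_atTop.1 hev
  exact ⟨X₂, fun X hX => h X hX⟩
end
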